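/- arXiv:1208.0472 — 2 statements merged into one kernel-verified Lean document; each statement's English description precedes it below -/
import Mathlib

section
/- Let S be a Polish space and Ψ : P(S) → P(S) continuous with compact range. Then J(θ) := R(θ‖Ψ(θ)) has compact sublevel sets J⁻¹([0,c]) for every c ∈ [0,∞), i.e., J is a good rate function. -/
/-!
The proof rests on the dual (Donsker-Varadhan type) description of relative entropy. For
probability measures, `R(ν ‖ μ) = ∫ klFun (dν/dμ) dμ` with `klFun a = a log a + 1 - a`, and the
convex conjugate of `klFun` is `exp - 1`, so that for `c ≥ 0`
`R(ν ‖ μ) ≤ c ↔ ∀ g bounded measurable, ∫ g dν - ∫ (exp g - 1) dμ ≤ c`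
(`dualBound_of_relEnt_le`, `DualBound.relEnt_le`). Approximation in `L¹(ν + μ)` shows that it is
enough to test continuous bounded `g` (`dualBound_of_continuous`). For such a `g` both integrals
are weakly continuous, so with `μ = Ψ ν` and `Ψ` continuous the sublevel set is closed
(`isClosed_dualBound`). Testing `g = M 1_{Kᶜ}` bounds `ν(Kᶜ)` by
`(c + (exp M - 1) Ψ(ν)(Kᶜ)) / M`, so tightness of the range of `Ψ` passes to the sublevel set
(`isTightMeasureSet_dualBound`), and Prokhorov's theorem concludes.
-/


open MeasureTheory ProbabilityTheory Real Filter Topology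
open scoped Classical ENNReal NNReal

/-- Relative entropy `R(ν ‖ μ)`: `∫ log (dν/dμ) dν` if `ν ≪ μ` (and the log-likelihood ratio
is `ν`-integrable), and `∞` otherwise. -/
noncomputable def relEnt {S : Type*} [MeasurableSpace S] (ν μ : Measure S) : EReal :=
  if ν ≪ μ ∧ Integrable (llr ν μ) ν then ((∫ x, llr ν μ x ∂ν : ℝ) : EReal) else ⊤


/-! ### Dual description of relative entropy -/

/-- The entropy `klFun` dominates its supporting lines, parametrised by their slope `y`
(Fenchel-Young inequality for the conjugate pair `klFun`, `exp - 1`). -/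
lemma mul_sub_exp_le_klFun {a : ℝ} (ha : 0 ≤ a) (y : ℝ) :
    a * y - (exp y - 1) ≤ InformationTheory.klFun a := by
  rw [InformationTheory.klFun_apply]
  rcases ha.eq_or_lt with rfl | ha
  · have := exp_pos y
    simp only [zero_mul, sub_zero]
    linarith
  · have h1 : exp y = a * exp (y - log a) := by
      rw [exp_sub, exp_log ha]; field_simp
    have h2 := mul_le_mul_of_nonneg_left (add_one_le_exp (y - log a)) ha.le
    rw [h1]
    nlinarith

lemma integrable_of_bdd {S : Type*} [MeasurableSpace S] (μ : Measure S) [IsFiniteMeasure μ]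
    {g : S → ℝ} (hg : Measurable g) {M : ℝ} (hM : ∀ x, |g x| ≤ M) : Integrable g μ :=
  Integrable.of_bound hg.aestronglyMeasurable M (ae_of_all _ hM)

lemma integrable_exp_sub_one_of_bdd {S : Type*} [MeasurableSpace S] (μ : Measure S)
    [IsFiniteMeasure μ] {g : S → ℝ} (hg : Measurable g) {M : ℝ} (hM : ∀ x, |g x| ≤ M) :
    Integrable (fun x => exp (g x) - 1) μ := by
  refine Integrable.sub (Integrable.of_bound (by fun_prop) (exp M) (ae_of_all _ fun x => ?_))
    (integrable_const _)
  rw [norm_eq_abs, abs_exp]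
  exact exp_le_exp.2 ((le_abs_self _).trans (hM x))

/-- The dual form of the bound `R(ν ‖ μ) ≤ c` on the relative entropy:
`∫ g dν - ∫ (exp g - 1) dμ ≤ c` for all bounded measurable `g`. -/
def DualBound {S : Type*} [MeasurableSpace S] (ν μ : Measure S) (c : ℝ) : Prop :=
  ∀ g : S → ℝ, Measurable g → ∀ M : ℝ, (∀ x, |g x| ≤ M) →
    ∫ x, g x ∂ν ≤ c + ∫ x, (exp (g x) - 1) ∂μ

lemma dualBound_of_relEnt_le {S : Type*} [MeasurableSpace S] {ν μ : Measure S}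
    [IsProbabilityMeasure ν] [IsProbabilityMeasure μ] {c : ℝ}
    (h : relEnt ν μ ≤ (c : EReal)) : DualBound ν μ c := by
  unfold relEnt at h
  split_ifs at h with hac
  · obtain ⟨hac, hint⟩ := hac
    rw [EReal.coe_le_coe_iff] at h
    intro g hg M hM
    have hgν : Integrable g ν := integrable_of_bdd ν hg hM
    have he := integrable_exp_sub_one_of_bdd μ hg hM
    have hkl := (InformationTheory.integrable_klFun_rnDeriv_iff hac).2 hint
    have hfg : Integrable (fun x => (ν.rnDeriv μ x).toReal * g x) μ := by
      simpa [smul_eq_mul] using (integrable_rnDeriv_smul_iff hac (f := g)).2 hgν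
    have e1 : ∫ x, (ν.rnDeriv μ x).toReal * g x ∂μ = ∫ x, g x ∂ν := by
      simpa [smul_eq_mul] using integral_rnDeriv_smul hac (f := g)
    have e2 := InformationTheory.integral_klFun_rnDeriv hac hint
    have e3 : ∫ x, ((ν.rnDeriv μ x).toReal * g x - (exp (g x) - 1)) ∂μ
        ≤ ∫ x, InformationTheory.klFun (ν.rnDeriv μ x).toReal ∂μ :=
      integral_mono (hfg.sub he) hkl
        fun x => mul_sub_exp_le_klFun ENNReal.toReal_nonneg _
    rw [integral_sub hfg he, e1, e2] at e3
    simp only [probReal_univ] at e3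
    linarith
  · exact absurd h (by simp)

/-- Testing against a multiple of an indicator: small `μ`-mass forces small `ν`-mass. -/
lemma DualBound.mul_measureReal_le {S : Type*} [MeasurableSpace S] {ν μ : Measure S} {c : ℝ}
    (h : DualBound ν μ c) {A : Set S} (hA : MeasurableSet A) {M : ℝ} (hM : 0 ≤ M) :
    M * ν.real A ≤ c + (exp M - 1) * μ.real A := by
  have h1 := h (A.indicator fun _ => M) (measurable_const.indicator hA) M (fun x => by
    by_cases hx : x ∈ A <;> simp [hx, abs_of_nonneg hM, hM])
  have h2 : (fun x => exp (A.indicator (fun _ => M) x) - 1)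
      = A.indicator fun _ => exp M - 1 := by
    ext x
    by_cases hx : x ∈ A <;> simp [hx]
  rw [h2, integral_indicator_const _ hA, integral_indicator_const _ hA] at h1
  simp only [smul_eq_mul] at h1
  linarith

lemma DualBound.absolutelyContinuous {S : Type*} [MeasurableSpace S] {ν μ : Measure S}
    [IsFiniteMeasure ν] {c : ℝ} (h : DualBound ν μ c) : ν ≪ μ := by
  refine Measure.AbsolutelyContinuous.mk fun A hA hμ => ?_
  have hμ' : μ.real A = 0 := by simp [Measure.real, hμ]
  by_contra hne
  have hpos : 0 < ν.real A := ENNReal.toReal_pos hne (measure_ne_top _ _)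
  have h1 := h.mul_measureReal_le hA (M := (|c| + 1) / ν.real A) (by positivity)
  rw [hμ', div_mul_cancel₀ _ hpos.ne', mul_zero] at h1
  linarith [le_abs_self c]

/-- The supporting line of `klFun` at a point `b` between `a` and `1` is nonnegative at `a`. -/
lemma mul_log_sub_nonneg {a b : ℝ} (hb : 0 < b)
    (hab : (1 ≤ b ∧ b ≤ a) ∨ (a ≤ b ∧ b ≤ 1)) : 0 ≤ a * log b - (b - 1) := by
  have h0 := InformationTheory.klFun_nonneg hb.le
  rw [InformationTheory.klFun_apply] at h0
  rcases hab with ⟨h1, h2⟩ | ⟨h1, h2⟩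
  · nlinarith [log_nonneg h1]
  · nlinarith [log_nonpos hb.le h2]

/-- The density is optimal in the dual bound: testing with its logarithm, truncated at
`± log (n + 1)`, and letting `n → ∞` recovers the relative entropy by Fatou's lemma. -/
lemma DualBound.relEnt_le {S : Type*} [MeasurableSpace S] {ν μ : Measure S}
    [IsProbabilityMeasure ν] [IsProbabilityMeasure μ] {c : ℝ} (hc : 0 ≤ c)
    (h : DualBound ν μ c) : relEnt ν μ ≤ (c : EReal) := by
  have hac := h.absolutelyContinuous
  set f : S → ℝ := fun x => (ν.rnDeriv μ x).toReal with hf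
  have hfm : Measurable f := (Measure.measurable_rnDeriv _ _).ennreal_toReal
  have hf0 : ∀ x, 0 ≤ f x := fun x => ENNReal.toReal_nonneg
  let b : ℕ → S → ℝ := fun n x => max ((n + 1 : ℝ)⁻¹) (min (n + 1 : ℝ) (f x))
  have hbm : ∀ n, Measurable (b n) := fun n => by fun_prop
  have hn1 : ∀ n : ℕ, (1 : ℝ) ≤ n + 1 := fun n => by
    have : (0 : ℝ) ≤ n := Nat.cast_nonneg n
    linarith
  have hinv : ∀ n : ℕ, (n + 1 : ℝ)⁻¹ ≤ 1 := fun n => inv_le_one_of_one_le₀ (hn1 n)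
  have hipos : ∀ n : ℕ, 0 < (n + 1 : ℝ)⁻¹ := fun n => by positivity
  have hbl : ∀ (n : ℕ) x, (n + 1 : ℝ)⁻¹ ≤ b n x := fun n x => le_max_left _ _
  have hbu : ∀ (n : ℕ) x, b n x ≤ n + 1 := fun n x =>
    max_le ((hinv n).trans (hn1 n)) (min_le_left _ _)
  have hbpos : ∀ n x, 0 < b n x := fun n x => (hipos n).trans_le (hbl n x)
  have hbb : ∀ n x, (1 ≤ b n x ∧ b n x ≤ f x) ∨ (f x ≤ b n x ∧ b n x ≤ 1) := by
    intro n x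
    rcases le_total 1 (f x) with h1 | h1
    · left
      exact ⟨(le_min (hn1 n) h1).trans (le_max_right _ _),
        max_le ((hinv n).trans h1) (min_le_right _ _)⟩
    · right
      refine ⟨?_, max_le (hinv n) ((min_le_right _ _).trans h1)⟩
      exact (le_min (h1.trans (hn1 n)) le_rfl).trans (le_max_right _ _)
  have hlogm : ∀ n, Measurable fun x => log (b n x) := fun n => (hbm n).log
  have hlogb : ∀ (n : ℕ) x, |log (b n x)| ≤ log (n + 1) := by
    intro n x
    rw [abs_le]
    constructor
    · rw [← log_inv]
      exact log_le_log (hipos n) (hbl n x)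
    · exact log_le_log (hbpos n x) (hbu n x)
  have hbound : ∀ n, ∫⁻ x, ENNReal.ofReal (f x * log (b n x) - (b n x - 1)) ∂μ
      ≤ ENNReal.ofReal c := by
    intro n
    have h1 := h _ (hlogm n) _ (hlogb n)
    have he := integrable_exp_sub_one_of_bdd μ (hlogm n) (hlogb n)
    have hgν : Integrable (fun x => log (b n x)) ν := integrable_of_bdd ν (hlogm n) (hlogb n)
    have hfg : Integrable (fun x => f x * log (b n x)) μ := by
      simpa [smul_eq_mul] using (integrable_rnDeriv_smul_iff hac).2 hgν
    have e1 : ∫ x, f x * log (b n x) ∂μ = ∫ x, log (b n x) ∂ν := by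
      simpa [smul_eq_mul] using integral_rnDeriv_smul hac (f := fun x => log (b n x))
    simp only [exp_log (hbpos n _)] at h1 he
    have hdiff : Integrable (fun x => f x * log (b n x) - (b n x - 1)) μ := hfg.sub he
    rw [← ofReal_integral_eq_lintegral_ofReal hdiff
      (ae_of_all _ fun x => mul_log_sub_nonneg (hbpos n x) (hbb n x))]
    refine ENNReal.ofReal_le_ofReal ?_
    rw [integral_sub hfg he, e1]
    linarith
  have hlim : ∀ x, Tendsto (fun n : ℕ => ENNReal.ofReal (f x * log (b n x) - (b n x - 1))) atTop
      (𝓝 (ENNReal.ofReal (InformationTheory.klFun (f x)))) := by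
    intro x
    refine (ENNReal.continuous_ofReal.tendsto _).comp ?_
    have hinv0 : Tendsto (fun n : ℕ => ((n : ℝ) + 1)⁻¹) atTop (𝓝 0) := by
      simpa [one_div] using tendsto_one_div_add_atTop_nhds_zero_nat (𝕜 := ℝ)
    have hb : Tendsto (fun n => b n x) atTop (𝓝 (f x)) := by
      have h1 : Tendsto (fun n : ℕ => max ((n + 1 : ℝ)⁻¹) (f x)) atTop (𝓝 (max 0 (f x))) :=
        hinv0.max tendsto_const_nhds
      rw [max_eq_right (hf0 x)] at h1
      refine h1.congr' ?_
      obtain ⟨N, hN⟩ := exists_nat_ge (f x)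
      filter_upwards [eventually_ge_atTop N] with n hn
      have : (N : ℝ) ≤ n := by exact_mod_cast hn
      simp only [b]
      rw [min_eq_right (by linarith)]
    rw [InformationTheory.klFun_apply]
    rcases (hf0 x).eq_or_lt with h0 | h0
    · simp only [← h0, zero_mul, zero_sub, zero_add, sub_zero] at hb ⊢
      simpa using (hb.sub_const 1).neg
    · have := ((hb.log h0.ne').const_mul (f x)).sub (hb.sub_const 1)
      convert this using 2
      ring
  have hkl : InformationTheory.klDiv ν μ ≤ ENNReal.ofReal c := by
    rw [InformationTheory.klDiv_eq_lintegral_klFun_of_ac hac]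
    calc ∫⁻ x, ENNReal.ofReal (InformationTheory.klFun (f x)) ∂μ
        = ∫⁻ x, liminf (fun n : ℕ => ENNReal.ofReal (f x * log (b n x) - (b n x - 1))) atTop ∂μ :=
          lintegral_congr fun x => (hlim x).liminf_eq.symm
      _ ≤ liminf (fun n : ℕ => ∫⁻ x, ENNReal.ofReal (f x * log (b n x) - (b n x - 1)) ∂μ)
          atTop := by
          refine lintegral_liminf_le fun n => ?_
          exact ((hfm.mul (hlogm n)).sub ((hbm n).sub_const 1)).ennreal_ofReal
      _ ≤ liminf (fun _ : ℕ => ENNReal.ofReal c) atTop :=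
          liminf_le_liminf (Eventually.of_forall hbound)
      _ = ENNReal.ofReal c := liminf_const _
  have hint := (InformationTheory.klDiv_ne_top_iff.1 (ne_top_of_le_ne_top ENNReal.ofReal_ne_top hkl)).2
  rw [InformationTheory.klDiv_of_ac_of_integrable hac hint] at hkl
  unfold relEnt
  rw [if_pos ⟨hac, hint⟩, EReal.coe_le_coe_iff]
  have := (ENNReal.ofReal_le_ofReal_iff hc).1 hkl
  simpa using this

/-! ### Reduction to continuous test functions and closedness -/

/-- Both sides of the dual bound are Lipschitz for the distance of `L¹(ν + μ)` on functions bounded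
by a common constant, and truncated continuous functions are dense among those. -/
lemma dualBound_of_continuous {S : Type*} [MeasurableSpace S] [TopologicalSpace S] [PolishSpace S]
    [BorelSpace S] {ν μ : Measure S} [IsProbabilityMeasure ν] [IsProbabilityMeasure μ] {c : ℝ}
    (h : ∀ g : S → ℝ, Continuous g → ∀ M : ℝ, (∀ x, |g x| ≤ M) →
      ∫ x, g x ∂ν ≤ c + ∫ x, (exp (g x) - 1) ∂μ) : DualBound ν μ c := by
  intro g hg M hM
  refine le_of_forall_pos_le_add fun ε hε => ?_
  set C : ℝ := 1 + exp M with hC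
  have hCpos : 0 < C := by positivity
  obtain ⟨g₀, hg₀, -⟩ := (integrable_of_bdd (ν + μ) hg hM).exists_boundedContinuous_integral_sub_le
    (ε := ε / C) (by positivity)
  let g₁ : S → ℝ := fun x => max (-M) (min M (g₀ x))
  have hg₁c : Continuous g₁ := by fun_prop
  have hg₁m : Measurable g₁ := hg₁c.measurable
  have hg₁b : ∀ x, |g₁ x| ≤ M := by
    intro x
    have hM0 : 0 ≤ M := (abs_nonneg _).trans (hM x)
    exact abs_le.2 ⟨le_max_left _ _, max_le (by linarith) (min_le_left _ _)⟩
  have hcl : ∀ x, |g x - g₁ x| ≤ |g x - g₀ x| := by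
    intro x
    obtain ⟨h1, h2⟩ := abs_le.1 (hM x)
    have e : g x = max (-M) (min M (g x)) := by rw [min_eq_right h2, max_eq_right h1]
    have h3 := abs_max_sub_max_le_abs (min M (g x)) (min M (g₀ x)) (-M)
    have h4 := abs_min_sub_min_le_max M (g x) M (g₀ x)
    rw [sub_self, abs_zero, max_eq_right (abs_nonneg _)] at h4
    calc |g x - g₁ x| = |max (min M (g x)) (-M) - max (min M (g₀ x)) (-M)| := by
          rw [max_comm (min M (g x)), ← e, max_comm (min M (g₀ x))]
      _ ≤ _ := h3.trans h4
  have hgi : ∀ (ρ : Measure S) [IsFiniteMeasure ρ], Integrable g ρ :=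
    fun ρ _ => integrable_of_bdd ρ hg hM
  have hg₁i : ∀ (ρ : Measure S) [IsFiniteMeasure ρ], Integrable g₁ ρ :=
    fun ρ _ => integrable_of_bdd ρ hg₁m hg₁b
  have hdi : ∀ (ρ : Measure S) [IsFiniteMeasure ρ], Integrable (fun x => |g x - g₁ x|) ρ :=
    fun ρ _ => ((hgi ρ).sub (hg₁i ρ)).abs
  have hd : ∫ x, |g x - g₁ x| ∂ν + ∫ x, |g x - g₁ x| ∂μ ≤ ε / C := by
    rw [← integral_add_measure (hdi ν) (hdi μ)]
    refine le_trans (integral_mono (hdi _) ?_ hcl) hg₀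
    exact ((hgi (ν + μ)).sub (g₀.integrable (ν + μ))).abs
  have hν : ∫ x, g x ∂ν ≤ ∫ x, g₁ x ∂ν + ∫ x, |g x - g₁ x| ∂ν := by
    rw [← integral_add (hg₁i ν) (hdi ν)]
    exact integral_mono (hgi ν) ((hg₁i ν).add (hdi ν))
      fun x => by
        have := le_abs_self (g x - g₁ x)
        linarith
  have hμ : ∫ x, (exp (g₁ x) - 1) ∂μ
      ≤ ∫ x, (exp (g x) - 1) ∂μ + exp M * ∫ x, |g x - g₁ x| ∂μ := by
    have i1 := integrable_exp_sub_one_of_bdd μ hg hM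
    have i2 := (hdi μ).const_mul (exp M)
    rw [← integral_const_mul, ← integral_add i1 i2]
    refine integral_mono (integrable_exp_sub_one_of_bdd μ hg₁m hg₁b) (i1.add i2) fun x => ?_
    -- convexity of `exp` bounds the increment by the slope at `g₁ x`, which is at most `exp M`
    have h1 : exp (g₁ x) * (g x - g₁ x + 1) ≤ exp (g x) := by
      have := mul_le_mul_of_nonneg_left (add_one_le_exp (g x - g₁ x)) (exp_pos (g₁ x)).le
      rwa [← exp_add, add_sub_cancel] at this
    have h2 : exp (g₁ x) ≤ exp M := exp_le_exp.2 ((le_abs_self _).trans (hg₁b x))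
    have h3 : exp (g₁ x) * |g x - g₁ x| ≤ exp M * |g x - g₁ x| :=
      mul_le_mul_of_nonneg_right h2 (abs_nonneg _)
    have h4 : exp (g₁ x) * (-|g x - g₁ x|) ≤ exp (g₁ x) * (g x - g₁ x) :=
      mul_le_mul_of_nonneg_left (neg_abs_le _) (exp_pos _).le
    linarith
  have hfin := h g₁ hg₁c M hg₁b
  have n1 : 0 ≤ ∫ x, |g x - g₁ x| ∂ν := integral_nonneg fun _ => abs_nonneg _
  have n2 : 0 ≤ ∫ x, |g x - g₁ x| ∂μ := integral_nonneg fun _ => abs_nonneg _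
  have hd' : (∫ x, |g x - g₁ x| ∂ν + ∫ x, |g x - g₁ x| ∂μ) * C ≤ ε := (le_div_iff₀ hCpos).1 hd
  have n3 := mul_nonneg n1 (exp_pos M).le
  rw [hC] at hd'
  linarith

lemma isClosed_dualBound {S : Type*} [MeasurableSpace S] [TopologicalSpace S] [PolishSpace S]
    [BorelSpace S] {Ψ : ProbabilityMeasure S → ProbabilityMeasure S} (hΨ : Continuous Ψ) (c : ℝ) :
    IsClosed {θ : ProbabilityMeasure S | DualBound (θ : Measure S) (Ψ θ : Measure S) c} := by
  have : {θ : ProbabilityMeasure S | DualBound (θ : Measure S) (Ψ θ : Measure S) c}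
      = {θ : ProbabilityMeasure S | ∀ g : S → ℝ, Continuous g → ∀ M : ℝ, (∀ x, |g x| ≤ M) →
          ∫ x, g x ∂(θ : Measure S) ≤ c + ∫ x, (exp (g x) - 1) ∂(Ψ θ : Measure S)} := by
    ext θ
    exact ⟨fun h g hg M hM => h g hg.measurable M hM, dualBound_of_continuous⟩
  rw [this]
  simp only [Set.ofPred_forall]
  refine isClosed_iInter fun g => isClosed_iInter fun hg => isClosed_iInter fun M =>
    isClosed_iInter fun hM => ?_
  let g₁ : BoundedContinuousFunction S ℝ :=
    BoundedContinuousFunction.ofNormedAddCommGroup g hg M hM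
  let g₂ : BoundedContinuousFunction S ℝ :=
    BoundedContinuousFunction.ofNormedAddCommGroup (fun x => exp (g x) - 1) (by fun_prop)
      (exp M + 1) (fun x => by
        have h1 : exp (g x) ≤ exp M := exp_le_exp.2 ((le_abs_self _).trans (hM x))
        have h2 := exp_pos (g x)
        rw [norm_eq_abs, abs_le]
        constructor <;> linarith)
  exact isClosed_le
    (ProbabilityMeasure.continuous_integral_boundedContinuousFunction g₁)
    (continuous_const.add
      ((ProbabilityMeasure.continuous_integral_boundedContinuousFunction g₂).comp hΨ))

/-! ### Tightness -/

lemma isTightMeasureSet_dualBound {S : Type*} [MeasurableSpace S] [TopologicalSpace S]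
    [PolishSpace S] [BorelSpace S] {Ψ : ProbabilityMeasure S → ProbabilityMeasure S}
    (hrange : IsCompact (Set.range Ψ)) {c : ℝ} (hc : 0 ≤ c) :
    IsTightMeasureSet {((μ : ProbabilityMeasure S) : Measure S) |
      μ ∈ {θ : ProbabilityMeasure S | DualBound (θ : Measure S) (Ψ θ : Measure S) c}} := by
  let _ := TopologicalSpace.upgradeIsCompletelyMetrizable S
  have hT : IsTightMeasureSet {((μ : ProbabilityMeasure S) : Measure S) | μ ∈ Set.range Ψ} :=
    isTightMeasureSet_of_isCompact_closure hrange.closure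
  rw [isTightMeasureSet_iff_exists_isCompact_measure_compl_le] at hT ⊢
  intro ε hε
  rcases eq_or_ne ε ∞ with rfl | hεt
  · exact ⟨∅, isCompact_empty, fun _ _ => le_top⟩
  set e := ε.toReal with he
  have hepos : 0 < e := ENNReal.toReal_pos hε.ne' hεt
  -- `M e = c + 1`, so that an error of size `1` remains to be absorbed by `(exp M - 1) μ(Kᶜ)`
  set M : ℝ := (c + 1) / e with hMdef
  have hM : 0 < M := by positivity
  obtain ⟨K, hK, hKμ⟩ := hT (ENNReal.ofReal (exp M)⁻¹) (by simp [exp_pos])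
  refine ⟨K, hK, ?_⟩
  rintro _ ⟨θ, hθ, rfl⟩
  have h1 := DualBound.mul_measureReal_le hθ hK.measurableSet.compl hM.le
  have h2 : (Ψ θ : Measure S).real Kᶜ ≤ (exp M)⁻¹ :=
    ENNReal.toReal_le_of_le_ofReal (by positivity) (hKμ _ ⟨Ψ θ, ⟨θ, rfl⟩, rfl⟩)
  have h3 : (exp M - 1) * (Ψ θ : Measure S).real Kᶜ ≤ 1 := by
    have h4 : exp M * (Ψ θ : Measure S).real Kᶜ ≤ exp M * (exp M)⁻¹ :=
      mul_le_mul_of_nonneg_left h2 (exp_pos M).le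
    rw [mul_inv_cancel₀ (exp_pos M).ne'] at h4
    have h5 : 0 ≤ (Ψ θ : Measure S).real Kᶜ := measureReal_nonneg
    linarith
  have h6 : M * (θ : Measure S).real Kᶜ ≤ M * e := by
    have : M * e = c + 1 := div_mul_cancel₀ _ hepos.ne'
    linarith
  have h7 := le_of_mul_le_mul_left h6 hM
  exact (ENNReal.toReal_le_toReal (measure_ne_top _ _) hεt).1 h7

/-- If `Ψ : P(S) → P(S)` is continuous with compact range, then `J(θ) := R(θ ‖ Ψ(θ))` has
compact sublevel sets, i.e. `J` is a good rate function. -/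
theorem stmt5 {S : Type*} [MeasurableSpace S] [TopologicalSpace S] [PolishSpace S] [BorelSpace S]
    (Ψ : ProbabilityMeasure S → ProbabilityMeasure S) (hΨ : Continuous Ψ)
    (hrange : IsCompact (Set.range Ψ)) :
    ∀ c : ℝ, 0 ≤ c →
      IsCompact {θ : ProbabilityMeasure S |
        relEnt (θ : Measure S) (Ψ θ : Measure S) ≤ (c : EReal)} := by
  intro c hc
  have : {θ : ProbabilityMeasure S | relEnt (θ : Measure S) (Ψ θ : Measure S) ≤ (c : EReal)}
      = {θ : ProbabilityMeasure S | DualBound (θ : Measure S) (Ψ θ : Measure S) c} := by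
    ext θ
    exact ⟨dualBound_of_relEnt_le, DualBound.relEnt_le hc⟩
  rw [this, ← (isClosed_dualBound hΨ c).closure_eq]
  exact isCompact_closure_of_isTightMeasureSet (isTightMeasureSet_dualBound hrange hc)
end

section
/- Let X, Y be Polish spaces, γ₀ ∈ P(Y), and ψ : P(X) × Y → X Borel measurable. Suppose: (A1) for each γ in a measurable set D ⊆ P(Y) the equation μ = γ ∘ ψ(μ,·)⁻¹ has a unique fixed point μ*(γ) and γ ↦ μ*(γ) is measurable on D; (A2) for every N, products ⊗^N γ₀ give full measure to tuples whose empirical measure lies in D; (A3) every γ with R(γ‖γ₀) < ∞ lies in D and μ* restricted to D is continuous at γ. For each N let Y₁^N,…,Y_N^N be i.i.d. with law γ₀ and let X_i^N satisfy X_i^N = ψ(μ^N, Y_i^N) a.s., where μ^N is the empirical measure of X₁^N,…,X_N^N. Then (μ^N) satisfies the large deviation principle on P(X) with good rate function I(η) = inf{ R(γ‖γ₀) : γ ∈ D, μ*(γ) = η } (inf ∅ = ∞). -/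
/-!
The large deviation principle is a contraction of Sanov's theorem for the noise.

Sanov's theorem is proved through the Donsker-Varadhan formula
`R(γ ‖ γ₀) = sup_f (∫ f dγ - log ∫ e^f dγ₀)`, over bounded continuous `f` (`relEnt_le_iff`). One
inequality is nonnegativity of the entropy relative to a tilted measure (`gibbs`); for the other,
the formula is extended to bounded measurable `f` by `L¹` density (`dv_extend`) and tested on clamped
log-densities (`relEnt_le_of_dv`). Each inequality `∫ f dν - log ∫ e^f dγ₀ ≥ a` has probability at
most `exp (-(N + 1) a)` under the empirical measure `ν` of `N + 1` samples (`chernoff`). Applied to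
multiples of indicators of complements of compact sets this gives exponential tightness
(`exists_compact_expTight`); hence compactness of the entropy balls (`isCompact_sublevel`) and, by a
finite cover, the upper bound (`sanov_upper`). The lower bound (`sanov_lower`) is a change of measure
from `γ₀` to `γ`, under which the empirical measures concentrate at `γ` and the average log-likelihood
ratio at `R(γ ‖ γ₀)`, both by the law of large numbers.

Almost surely the empirical measure of the particles solves the fixed point equation for the
empirical measure of the noise, so by uniqueness it is its image under `μ*` (`ae_empir_eq`). The map
`μ*` is only defined on `D` and only continuous at measures of finite entropy, but no other measure
matters: entropy balls lie in `D` and are mapped continuously (`isCompact_contractedRate`), a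
finite-entropy point in the closure of `D ∩ (μ*)⁻¹(F)` belongs to that set when `F` is closed
(`contraction_upper`), and finite-entropy points of `(μ*)⁻¹(G)`, for `G` open, have neighbourhoods
`U` with `U ∩ D ⊆ (μ*)⁻¹(G)` (`contraction_lower`).
-/

open MeasureTheory ProbabilityTheory Real Filter Topology
open scoped Classical ENNReal NNReal

/-- The empirical (probability) measure of `N+1` points. -/
noncomputable def empir {Z : Type*} [MeasurableSpace Z] {N : ℕ} (y : Fin (N + 1) → Z) :
    ProbabilityMeasure Z :=
  ⟨(((N : ℝ≥0∞) + 1))⁻¹ • ∑ i : Fin (N + 1), Measure.dirac (y i), by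
    constructor
    simp only [Measure.smul_apply, Measure.coe_finset_sum, Finset.sum_apply,
      measure_univ, Finset.sum_const, Finset.card_univ, Fintype.card_fin, nsmul_eq_mul,
      mul_one, smul_eq_mul]
    push_cast
    rw [ENNReal.inv_mul_cancel] <;> simp⟩

namespace SanovLDP

/-! ### Donsker-Varadhan duality for relative entropy -/

section entropy

variable {Y : Type*} [MeasurableSpace Y]

/-- Logarithmic moment generating functional `f ↦ log ∫ e^f dμ`. It has this meaning only when
`e^f` is `μ`-integrable, which always holds for the bounded `f` used below. -/
noncomputable def logMGF (μ : Measure Y) (f : Y → ℝ) : ℝ := Real.log (∫ y, Real.exp (f y) ∂μ)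

lemma integrable_of_bdd {μ : Measure Y} [IsFiniteMeasure μ] {f : Y → ℝ} (hf : Measurable f)
    {M : ℝ} (hM : ∀ y, |f y| ≤ M) : Integrable f μ :=
  Integrable.of_bound hf.aestronglyMeasurable M (ae_of_all _ fun y => by simpa using hM y)

lemma integrable_exp_of_bdd {μ : Measure Y} [IsFiniteMeasure μ] {f : Y → ℝ} (hf : Measurable f)
    {M : ℝ} (hM : ∀ y, |f y| ≤ M) : Integrable (fun y => Real.exp (f y)) μ :=
  integrable_of_bdd hf.exp (M := Real.exp M) fun y => by
    rw [abs_of_pos (Real.exp_pos _)]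
    exact Real.exp_le_exp.2 ((le_abs_self _).trans (hM y))

lemma exists_of_relEnt_le {γ μ : Measure Y} {c : ℝ} (h : relEnt γ μ ≤ (c : EReal)) :
    γ ≪ μ ∧ Integrable (llr γ μ) γ ∧ ∫ x, llr γ μ x ∂γ ≤ c := by
  unfold relEnt at h
  split_ifs at h with h'
  · exact ⟨h'.1, h'.2, by exact_mod_cast h⟩
  · simp at h

/-- Easy half of the Donsker-Varadhan formula (Gibbs' variational inequality): the difference of
the two sides is the relative entropy with respect to the tilted measure `e^f μ / ∫ e^f dμ`. -/
lemma gibbs {γ μ : Measure Y} [IsProbabilityMeasure γ] [IsProbabilityMeasure μ] {c : ℝ}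
    (h : relEnt γ μ ≤ (c : EReal)) {f : Y → ℝ} (hf : Measurable f) {M : ℝ}
    (hM : ∀ y, |f y| ≤ M) : ∫ y, f y ∂γ - logMGF μ f ≤ c := by
  obtain ⟨hac, hint, hle⟩ := exists_of_relEnt_le h
  have he := integrable_exp_of_bdd (μ := μ) hf hM
  have h1 := integral_llr_tilted_right hac (integrable_of_bdd (μ := γ) hf hM) he hint
  have hp : IsProbabilityMeasure (μ.tilted f) := isProbabilityMeasure_tilted he
  have h2 := InformationTheory.integral_llr_add_sub_measure_univ_nonneg
    (hac.trans (absolutelyContinuous_tilted he))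
    (integrable_llr_tilted_right hac (integrable_of_bdd (μ := γ) hf hM) hint he)
  simp only [probReal_univ] at h2
  unfold logMGF
  linarith

lemma abs_exp_sub_exp_le {a b M : ℝ} (ha : a ≤ M) (hb : b ≤ M) :
    |Real.exp a - Real.exp b| ≤ Real.exp M * |a - b| := by
  wlog hab : b ≤ a generalizing a b
  · rw [abs_sub_comm, abs_sub_comm a b]
    exact this hb ha (le_of_not_ge hab)
  rw [abs_of_nonneg (sub_nonneg.2 (Real.exp_le_exp.2 hab)), abs_of_nonneg (sub_nonneg.2 hab)]
  have h1 : Real.exp b = Real.exp a * Real.exp (b - a) := by rw [← Real.exp_add]; ring_nf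
  have h2 := Real.add_one_le_exp (b - a)
  have h3 := Real.exp_le_exp.2 ha
  have h4 := Real.exp_pos a
  nlinarith [sub_nonneg.2 hab]

/-- Clamping to `[-M, M]` does not increase distances. -/
lemma abs_clamp_sub_clamp_le (a b M : ℝ) :
    |max (min a M) (-M) - max (min b M) (-M)| ≤ |a - b| :=
  (abs_max_sub_max_le_abs _ _ _).trans (abs_min_sub_min_le_max _ _ _ _ |>.trans (by simp))

lemma abs_clamp_le (a : ℝ) {M : ℝ} (hM : 0 ≤ M) : |max (min a M) (-M)| ≤ M := by
  rw [abs_le]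
  exact ⟨le_max_right _ _, max_le (min_le_right _ _) (by linarith)⟩

lemma clamp_eq {a M : ℝ} (h : |a| ≤ M) : max (min a M) (-M) = a := by
  rw [abs_le] at h
  rw [min_eq_left h.2, max_eq_left h.1]

/-- The Donsker-Varadhan bound extends from bounded continuous to bounded measurable functions,
by density of bounded continuous functions in `L¹(γ + μ)`. -/
lemma dv_extend [TopologicalSpace Y] [PolishSpace Y] [BorelSpace Y]
    {γ μ : Measure Y} [IsProbabilityMeasure γ] [IsProbabilityMeasure μ] {c : ℝ}
    (h : ∀ g : BoundedContinuousFunction Y ℝ, ∫ y, g y ∂γ - logMGF μ g ≤ c)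
    {f : Y → ℝ} (hf : Measurable f) {M : ℝ} (hM : ∀ y, |f y| ≤ M) :
    ∫ y, f y ∂γ - logMGF μ f ≤ c := by
  have hM0 : 0 ≤ M := by
    obtain ⟨y⟩ : Nonempty Y := γ.nonempty_of_neZero
    exact (abs_nonneg _).trans (hM y)
  let := TopologicalSpace.upgradeIsCompletelyMetrizable Y
  have hif := integrable_of_bdd (μ := γ) hf hM
  have hif' := integrable_of_bdd (μ := μ) hf hM
  have hie := integrable_exp_of_bdd (μ := μ) hf hM
  have key : ∀ ε > 0, ∫ y, f y ∂γ ≤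
      c + ε + Real.log (∫ y, Real.exp (f y) ∂μ + Real.exp M * ε) := by
    intro ε hε
    obtain ⟨g, hg, hgi⟩ := (integrable_of_bdd (μ := γ + μ) hf
      hM).exists_boundedContinuous_integral_sub_le hε
    -- Clamping `g` keeps it within distance `|f - g|` of `f` and bounds `exp` by `e^M`.
    let g' : BoundedContinuousFunction Y ℝ := BoundedContinuousFunction.ofNormedAddCommGroup
      (fun y => max (min (g y) M) (-M)) (by fun_prop) M (fun y => abs_clamp_le _ hM0)
    have hg'v : ∀ y, g' y = max (min (g y) M) (-M) := fun y => rfl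
    have hg'M : ∀ y, |g' y| ≤ M := fun y => abs_clamp_le _ hM0
    have hg'm : Measurable g' := g'.continuous.measurable
    have hd : ∀ y, |f y - g' y| ≤ |f y - g y| := fun y => by
      rw [hg'v, ← clamp_eq (hM y)]
      exact abs_clamp_sub_clamp_le _ _ _ |>.trans (by rw [clamp_eq (hM y)])
    have hig : ∀ ν : Measure Y, IsProbabilityMeasure ν → Integrable (fun y => |f y - g y|) ν :=
      fun ν _ => ((integrable_of_bdd hf hM).sub (g.integrable ν)).abs
    have hsum : ∫ y, |f y - g y| ∂γ + ∫ y, |f y - g y| ∂μ ≤ ε := by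
      rw [← integral_add_measure (hig γ inferInstance) (hig μ inferInstance)]
      simpa using hg
    have hp1 : 0 ≤ ∫ y, |f y - g y| ∂γ := integral_nonneg fun y => abs_nonneg _
    have hp2 : 0 ≤ ∫ y, |f y - g y| ∂μ := integral_nonneg fun y => abs_nonneg _
    have h1 : ∫ y, f y ∂γ ≤ ∫ y, g' y ∂γ + ε := by
      have : ∫ y, f y ∂γ ≤ ∫ y, (g' y + |f y - g y|) ∂γ := by
        refine integral_mono hif ((g'.integrable γ).add (hig γ inferInstance)) fun y => ?_
        have := (le_abs_self _).trans (hd y)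
        simp only
        linarith
      rw [integral_add (g'.integrable γ) (hig γ inferInstance)] at this
      linarith
    have h2 : ∫ y, Real.exp (g' y) ∂μ ≤ ∫ y, Real.exp (f y) ∂μ + Real.exp M * ε := by
      have : ∫ y, Real.exp (g' y) ∂μ ≤
          ∫ y, (Real.exp (f y) + Real.exp M * |f y - g y|) ∂μ := by
        refine integral_mono (integrable_exp_of_bdd hg'm hg'M)
          (hie.add ((hig μ inferInstance).const_mul _)) fun y => ?_
        have h3 := abs_exp_sub_exp_le ((le_abs_self _).trans (hg'M y))
          ((le_abs_self _).trans (hM y))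
        have h4 := (le_abs_self _).trans h3
        rw [abs_sub_comm] at h4
        have h5 := mul_le_mul_of_nonneg_left (hd y) (Real.exp_pos M).le
        simp only
        linarith
      rw [integral_add hie ((hig μ inferInstance).const_mul _), integral_const_mul] at this
      have h6 : Real.exp M * ∫ y, |f y - g y| ∂μ ≤ Real.exp M * ε :=
        mul_le_mul_of_nonneg_left (by linarith) (Real.exp_pos M).le
      linarith
    have h3 := h g'
    unfold logMGF at h3
    have h4 := Real.log_le_log (integral_exp_pos (integrable_exp_of_bdd (μ := μ) hg'm hg'M)) h2
    linarith
  have hpos : 0 < ∫ y, Real.exp (f y) ∂μ := integral_exp_pos hie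
  have hlim : Tendsto (fun ε : ℝ => c + ε + Real.log (∫ y, Real.exp (f y) ∂μ + Real.exp M * ε))
      (𝓝[>] 0) (𝓝 (c + 0 + Real.log (∫ y, Real.exp (f y) ∂μ + Real.exp M * 0))) := by
    refine Tendsto.mono_left ?_ nhdsWithin_le_nhds
    refine ContinuousAt.tendsto ?_
    refine ContinuousAt.add (by fun_prop) (ContinuousAt.log (by fun_prop) (by simpa using hpos.ne'))
  have := ge_of_tendsto hlim (eventually_mem_nhdsWithin.mono fun ε hε => key ε hε)
  unfold logMGF
  simp only [add_zero, mul_zero] at this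
  linarith

/-- Testing with `t` times the indicator of a `μ`-null set `s` gives `t γ(s) ≤ c` for all `t`. -/
lemma ac_of_dv {γ μ : Measure Y} [IsProbabilityMeasure γ] [IsProbabilityMeasure μ] {c : ℝ}
    (h : ∀ f : Y → ℝ, Measurable f → ∀ M, (∀ y, |f y| ≤ M) → ∫ y, f y ∂γ - logMGF μ f ≤ c) :
    γ ≪ μ := by
  refine Measure.AbsolutelyContinuous.mk fun s hs h0 => ?_
  have key : ∀ t : ℝ, 0 ≤ t → t * γ.real s ≤ c := by
    intro t ht
    have := h (s.indicator fun _ => t) (measurable_const.indicator hs) t (fun y => by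
      by_cases hy : y ∈ s <;> simp [hy, abs_of_nonneg ht, ht])
    rw [integral_indicator_const _ hs] at this
    have h1 : logMGF μ (s.indicator fun _ => t) = 0 := by
      unfold logMGF
      have : (fun y => Real.exp (s.indicator (fun _ => t) y)) =ᵐ[μ] fun _ => (1 : ℝ) := by
        filter_upwards [measure_eq_zero_iff_ae_notMem.1 h0] with y hy
        simp [hy]
      rw [integral_congr_ae this]
      simp
    rw [h1] at this
    simp only [smul_eq_mul, sub_zero] at this
    linarith
  by_contra hne
  have hpos : 0 < γ.real s := by
    rw [measureReal_def]
    exact ENNReal.toReal_pos hne (measure_ne_top _ _)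
  have h1 := key ((|c| + 1) / γ.real s) (by positivity)
  rw [div_mul_cancel₀ _ hpos.ne'] at h1
  linarith [le_abs_self c]

/-- Donsker-Varadhan: a uniform bound on the dual functional over bounded measurable functions
bounds the relative entropy. Test functions are `log` of the density clamped to
`[e^{-n}, e^n]`; clamping the density rather than `llr` avoids the convention `log 0 = 0`. -/
lemma relEnt_le_of_dv {γ μ : Measure Y} [IsProbabilityMeasure γ] [IsProbabilityMeasure μ] {c : ℝ}
    (h : ∀ f : Y → ℝ, Measurable f → ∀ M, (∀ y, |f y| ≤ M) → ∫ y, f y ∂γ - logMGF μ f ≤ c) :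
    relEnt γ μ ≤ (c : EReal) := by
  have hac := ac_of_dv h
  set r : Y → ℝ := fun y => (γ.rnDeriv μ y).toReal with hr
  have hrm : Measurable r := (Measure.measurable_rnDeriv γ μ).ennreal_toReal
  have hr0 : ∀ y, 0 ≤ r y := fun y => ENNReal.toReal_nonneg
  have hrpos : ∀ᵐ y ∂γ, 0 < r y := by
    filter_upwards [Measure.rnDeriv_pos hac, hac.ae_le (Measure.rnDeriv_lt_top γ μ)] with y h1 h2
    exact ENNReal.toReal_pos h1.ne' h2.ne
  have hri : Integrable r μ := Measure.integrable_toReal_rnDeriv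
  have hr1 : ∫ y, r y ∂μ = 1 := by
    rw [hr, Measure.integral_toReal_rnDeriv hac]; simp
  let q : ℕ → Y → ℝ := fun n y => max (min (r y) (Real.exp n)) (Real.exp (-n))
  let F : ℕ → Y → ℝ := fun n y => Real.log (q n y)
  have hqpos : ∀ n y, 0 < q n y := fun n y => lt_max_of_lt_right (Real.exp_pos _)
  have hqm : ∀ n, Measurable (q n) := fun n => by fun_prop
  have hFm : ∀ n, Measurable (F n) := fun n => (hqm n).log
  have hFb : ∀ n y, |F n y| ≤ n := by
    intro n y
    rw [abs_le]
    constructor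
    · rw [Real.le_log_iff_exp_le (hqpos n y)]
      exact le_max_right _ _
    · rw [Real.log_le_iff_le_exp (hqpos n y)]
      exact max_le (min_le_right _ _) (Real.exp_le_exp.2 (by linarith [n.cast_nonneg (α := ℝ)]))
  -- The clamped density is at most `r + e^{-n}`, whose `μ`-integral is `1 + e^{-n}`.
  have hFint : ∀ n, ∫ y, F n y ∂γ ≤ c + Real.log (1 + Real.exp (-n)) := by
    intro n
    have h1 := h (F n) (hFm n) n (hFb n)
    have h2 : ∫ y, Real.exp (F n y) ∂μ ≤ 1 + Real.exp (-n) := by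
      have h3 : ∫ y, Real.exp (F n y) ∂μ ≤ ∫ y, (r y + Real.exp (-n)) ∂μ := by
        refine integral_mono (integrable_exp_of_bdd (hFm n) (hFb n))
          (hri.add (integrable_const _)) fun y => ?_
        simp only [F]
        rw [Real.exp_log (hqpos n y)]
        exact max_le ((min_le_left _ _).trans (by linarith [Real.exp_pos (-n : ℝ)]))
          (by linarith [hr0 y])
      rw [integral_add hri (integrable_const _), hr1] at h3
      simpa using h3
    have h4 := Real.log_le_log (integral_exp_pos (integrable_exp_of_bdd (μ := μ) (hFm n) (hFb n))) h2
    unfold logMGF at h1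
    linarith
  have hllr : ∀ y, llr γ μ y = Real.log (r y) := fun y => rfl
  have hFlim : ∀ᵐ y ∂γ, Tendsto (fun n => F n y) atTop (𝓝 (llr γ μ y)) := by
    filter_upwards [hrpos] with y hy
    refine tendsto_const_nhds.congr' ?_
    obtain ⟨n, hn⟩ := exists_nat_ge |Real.log (r y)|
    filter_upwards [eventually_ge_atTop n] with m hm
    have hm' : |Real.log (r y)| ≤ m := hn.trans (by exact_mod_cast hm)
    rw [abs_le] at hm'
    simp only [F, q]
    rw [hllr, min_eq_left ((Real.log_le_iff_le_exp hy).1 hm'.2),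
      max_eq_left ((Real.le_log_iff_exp_le hy).1 hm'.1)]
  have hFle : ∀ᵐ y ∂γ, ∀ n, |F n y| ≤ |llr γ μ y| ∧ -Real.exp (-llr γ μ y) ≤ F n y := by
    filter_upwards [hrpos] with y hy n
    have hFc : F n y = max (min (llr γ μ y) n) (-n) := by
      simp only [F, q, hllr]
      rw [Real.strictMonoOn_log.monotoneOn.map_max (lt_min hy (Real.exp_pos _)) (Real.exp_pos _),
        Real.strictMonoOn_log.monotoneOn.map_min hy (Real.exp_pos _), Real.log_exp, Real.log_exp]
    have hn : (0 : ℝ) ≤ n := n.cast_nonneg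
    rw [hFc]
    have hexp := Real.add_one_le_exp (-llr γ μ y)
    have hexp' := Real.exp_pos (-llr γ μ y)
    constructor
    · have := abs_clamp_sub_clamp_le (llr γ μ y) 0 n
      simpa [hn] using this
    · rcases le_total 0 (llr γ μ y) with h0 | h0
      · exact le_max_of_le_left (le_min (by linarith) (by linarith))
      · exact le_max_of_le_left (le_min (by linarith) (by linarith))
  have hei : Integrable (fun y => Real.exp (-llr γ μ y)) γ :=
    (integrable_congr (exp_neg_llr hac)).2 Measure.integrable_toReal_rnDeriv
  -- `e^{-llr}` is `γ`-integrable and `F n + e^{-llr} ≥ 0`, so Fatou's lemma applies to these sums.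
  have hint : Integrable (llr γ μ) γ := by
    have hm : Measurable (fun y => llr γ μ y + Real.exp (-llr γ μ y)) := by
      have := measurable_llr γ μ
      fun_prop
    have : Integrable (fun y => llr γ μ y + Real.exp (-llr γ μ y)) γ := by
      refine ⟨hm.aestronglyMeasurable, ?_⟩
      have hlim : ∀ᵐ y ∂γ, Tendsto (fun n => F n y + Real.exp (-llr γ μ y)) atTop
          (𝓝 (llr γ μ y + Real.exp (-llr γ μ y))) := by
        filter_upwards [hFlim] with y hy using hy.add_const _
      have hfat : ∫⁻ y, ‖llr γ μ y + Real.exp (-llr γ μ y)‖ₑ ∂γ ≤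
          liminf (fun n => ∫⁻ y, ‖F n y + Real.exp (-llr γ μ y)‖ₑ ∂γ) atTop := by
        refine le_trans (lintegral_mono_ae ?_) (lintegral_liminf_le fun n => ?_)
        · filter_upwards [hlim] with y hy
          rw [hy.enorm.liminf_eq]
        · have := hFm n
          have := measurable_llr γ μ
          fun_prop
      refine hfat.trans_lt (lt_of_le_of_lt (b := ENNReal.ofReal
        (c + Real.log 2 + ∫ y, Real.exp (-llr γ μ y) ∂γ)) ?_ ENNReal.ofReal_lt_top)
      refine liminf_le_of_le (by isBoundedDefault) fun b hb => ?_
      obtain ⟨n, hn⟩ := hb.exists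
      refine hn.trans ?_
      have hFi : Integrable (fun y => F n y + Real.exp (-llr γ μ y)) γ :=
        (integrable_of_bdd (hFm n) (hFb n)).add hei
      rw [← ofReal_integral_norm_eq_lintegral_enorm hFi]
      refine ENNReal.ofReal_le_ofReal ?_
      have h1 : ∫ y, ‖F n y + Real.exp (-llr γ μ y)‖ ∂γ =
          ∫ y, (F n y + Real.exp (-llr γ μ y)) ∂γ := by
        refine integral_congr_ae ?_
        filter_upwards [hFle] with y hy
        exact Real.norm_of_nonneg (by linarith [(hy n).2])
      rw [h1, integral_add (integrable_of_bdd (hFm n) (hFb n)) hei]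
      have h2 : Real.log (1 + Real.exp (-n)) ≤ Real.log 2 := by
        refine Real.log_le_log (by positivity) ?_
        have : Real.exp (-n) ≤ 1 := Real.exp_le_one_iff.2 (by simp)
        linarith
      linarith [hFint n]
    exact (this.sub hei).congr (ae_of_all _ fun y => by simp)
  have hconv : Tendsto (fun n => ∫ y, F n y ∂γ) atTop (𝓝 (∫ y, llr γ μ y ∂γ)) :=
    tendsto_integral_of_dominated_convergence (fun y => |llr γ μ y|)
      (fun n => (hFm n).aestronglyMeasurable) hint.abs
      (fun n => by filter_upwards [hFle] with y hy using (hy n).1) hFlim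
  have hlim2 : Tendsto (fun n : ℕ => c + Real.log (1 + Real.exp (-(n : ℝ)))) atTop (𝓝 c) := by
    have h1 : Tendsto (fun n : ℕ => Real.exp (-(n : ℝ))) atTop (𝓝 0) :=
      Real.tendsto_exp_neg_atTop_nhds_zero.comp tendsto_natCast_atTop_atTop
    have h2 : Tendsto (fun n : ℕ => 1 + Real.exp (-(n : ℝ))) atTop (𝓝 1) := by
      simpa using h1.const_add 1
    simpa using (h2.log one_ne_zero).const_add c
  have hfin := le_of_tendsto_of_tendsto' hconv hlim2 hFint
  unfold relEnt
  rw [if_pos ⟨hac, hint⟩]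
  exact_mod_cast hfin

end entropy

/-! ### Exponential tightness and Sanov's upper bound -/

section empirical

variable {Y : Type*} [MeasurableSpace Y]

/-- The law of `N + 1` independent samples from `γ`. -/
noncomputable abbrev iidLaw (γ : Measure Y) (N : ℕ) : Measure (Fin (N + 1) → Y) :=
  Measure.pi fun _ => γ

lemma integral_empir {N : ℕ} (y : Fin (N + 1) → Y) {f : Y → ℝ} (hf : Measurable f) :
    ∫ x, f x ∂(empir y : Measure Y) = ((N : ℝ) + 1)⁻¹ * ∑ i, f (y i) := by
  have : (empir y : Measure Y) =
      (((N : ℝ≥0∞) + 1))⁻¹ • ∑ i : Fin (N + 1), Measure.dirac (y i) := rfl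
  rw [this, integral_smul_measure, integral_finsetSum_measure]
  · simp only [integral_dirac' _ _ hf.stronglyMeasurable, smul_eq_mul]
    congr 1
    rw [ENNReal.toReal_inv, ENNReal.toReal_add (by simp) (by simp)]
    simp
  · intro i _
    refine integrable_dirac' hf.stronglyMeasurable ?_
    simp

lemma continuous_empir [TopologicalSpace Y] [OpensMeasurableSpace Y] (N : ℕ) :
    Continuous (fun y : Fin (N + 1) → Y => empir y) := by
  rw [continuous_iff_continuousAt]
  intro y
  unfold ContinuousAt
  rw [ProbabilityMeasure.tendsto_iff_forall_integral_tendsto]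
  intro f
  simp only [integral_empir _ f.continuous.measurable]
  have : Continuous fun y : Fin (N + 1) → Y => ((N : ℝ) + 1)⁻¹ * ∑ i, f (y i) := by fun_prop
  exact this.tendsto y

/-- Chernoff's bound for the tilted half-space `{ν | a ≤ ∫ f dν - log ∫ e^f dμ}`. -/
lemma chernoff {μ : Measure Y} [IsProbabilityMeasure μ] {f : Y → ℝ} (hf : Measurable f) {M : ℝ}
    (hM : ∀ y, |f y| ≤ M) (a : ℝ) (N : ℕ) :
    iidLaw μ N {y | a ≤ ∫ x, f x ∂(empir y : Measure Y) - logMGF μ f} ≤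
      ENNReal.ofReal (Real.exp (-(((N : ℝ) + 1) * a))) := by
  have hie := integrable_exp_of_bdd (μ := μ) hf hM
  have hpos : 0 < ∫ y, Real.exp (f y) ∂μ := integral_exp_pos hie
  have hN : (0 : ℝ) < (N : ℝ) + 1 := by positivity
  set Λ := logMGF μ f with hΛ
  have hexpΛ : Real.exp (((N : ℝ) + 1) * Λ) = (∫ y, Real.exp (f y) ∂μ) ^ (N + 1) := by
    rw [hΛ, logMGF, ← Real.exp_log (pow_pos hpos _), Real.log_pow]
    push_cast; rfl
  have hprod : ∫ y : Fin (N + 1) → Y, ∏ i, Real.exp (f (y i)) ∂(iidLaw μ N) =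
      (∫ y, Real.exp (f y) ∂μ) ^ (N + 1) := by
    have := integral_fintype_prod_eq_pow (ι := Fin (N + 1)) (μ := μ) (fun y => Real.exp (f y))
    simpa using this
  have hint : Integrable (fun y : Fin (N + 1) → Y => ∏ i, Real.exp (f (y i))) (iidLaw μ N) :=
    Integrable.fintype_prod (f := fun _ y => Real.exp (f y)) fun _ => hie
  have hmk := mul_meas_ge_le_integral_of_nonneg (μ := iidLaw μ N)
    (f := fun y : Fin (N + 1) → Y => ∏ i, Real.exp (f (y i)))
    (ae_of_all _ fun y => Finset.prod_nonneg fun i _ => (Real.exp_pos _).le) hint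
    (Real.exp (((N : ℝ) + 1) * (a + Λ)))
  rw [hprod, ← hexpΛ] at hmk
  have hset : {y : Fin (N + 1) → Y | a ≤ ∫ x, f x ∂(empir y : Measure Y) - Λ} ⊆
      {y | Real.exp (((N : ℝ) + 1) * (a + Λ)) ≤ ∏ i, Real.exp (f (y i))} := by
    intro y hy
    simp only [Set.mem_ofPred_eq] at hy ⊢
    rw [← Real.exp_sum, Real.exp_le_exp]
    rw [integral_empir y hf] at hy
    have h1 : a + Λ ≤ ((N : ℝ) + 1)⁻¹ * ∑ i, f (y i) := by linarith
    have h2 := mul_le_mul_of_nonneg_left h1 hN.le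
    rwa [mul_inv_cancel_left₀ hN.ne'] at h2
  refine (measure_mono hset).trans ?_
  rw [← ENNReal.ofReal_toReal (measure_ne_top (iidLaw μ N) _)]
  refine ENNReal.ofReal_le_ofReal ?_
  rw [← measureReal_def]
  have h3 : Real.exp (-(((N : ℝ) + 1) * a)) =
      Real.exp (((N : ℝ) + 1) * Λ) / Real.exp (((N : ℝ) + 1) * (a + Λ)) := by
    rw [← Real.exp_sub]; ring_nf
  rw [h3, le_div_iff₀ (Real.exp_pos _), mul_comm]
  exact hmk

/-- The indicator of `Kᶜ` scaled by `2 k²`, the tilt used for exponential tightness. -/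
noncomputable def tiltFun (K : Set Y) (k : ℝ) : Y → ℝ := Kᶜ.indicator fun _ => 2 * k ^ 2

/-- If `μ(Kᶜ) ≤ e^{-2k²}`, the tilt costs at most `log 2 ≤ 1` in exponential moment, while its
mean under `ν` is large as soon as `ν(Kᶜ)` exceeds `1 / k`. -/
lemma tiltFun_facts {μ : Measure Y} [IsProbabilityMeasure μ] {K : Set Y} (hK : MeasurableSet K)
    {k : ℝ} (hμ : μ.real Kᶜ ≤ Real.exp (-(2 * k ^ 2))) :
    Measurable (tiltFun K k) ∧ (∀ y, |tiltFun K k y| ≤ 2 * k ^ 2) ∧ logMGF μ (tiltFun K k) ≤ 1 ∧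
      ∀ ν : Measure Y, ∫ y, tiltFun K k y ∂ν = 2 * k ^ 2 * ν.real Kᶜ := by
  have hm : Measurable (tiltFun K k) := measurable_const.indicator hK.compl
  have hb : ∀ y, |tiltFun K k y| ≤ 2 * k ^ 2 := fun y => by
    unfold tiltFun
    by_cases hy : y ∈ Kᶜ
    · rw [Set.indicator_of_mem hy, abs_of_nonneg (by positivity)]
    · rw [Set.indicator_of_notMem hy]; simp; positivity
  refine ⟨hm, hb, ?_, fun ν => ?_⟩
  · have h1 : ∫ y, Real.exp (tiltFun K k y) ∂μ ≤
        ∫ y, (1 + Kᶜ.indicator (fun _ => Real.exp (2 * k ^ 2)) y) ∂μ := by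
      refine integral_mono (integrable_exp_of_bdd hm hb) ((integrable_const _).add
        ((integrable_const _).indicator hK.compl)) fun y => ?_
      unfold tiltFun
      by_cases hy : y ∈ Kᶜ
      · simp only [Set.indicator_of_mem hy]; linarith
      · simp [Set.indicator_of_notMem hy]
    rw [integral_add (integrable_const _) ((integrable_const _).indicator hK.compl),
      integral_indicator_const _ hK.compl] at h1
    have h2 : μ.real Kᶜ * Real.exp (2 * k ^ 2) ≤ 1 := by
      refine (mul_le_mul_of_nonneg_right hμ (Real.exp_pos _).le).trans ?_
      rw [← Real.exp_add]; simp
    simp only [integral_const, probReal_univ, smul_eq_mul, one_mul] at h1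
    unfold logMGF
    have h4 := Real.add_one_le_exp 1
    rw [Real.log_le_iff_le_exp (integral_exp_pos (integrable_exp_of_bdd hm hb))]
    linarith
  · unfold tiltFun
    rw [integral_indicator_const _ hK.compl, smul_eq_mul, mul_comm]

lemma continuous_dual [TopologicalSpace Y] [OpensMeasurableSpace Y] (γ₀ : Measure Y)
    (f : BoundedContinuousFunction Y ℝ) :
    Continuous fun γ : ProbabilityMeasure Y => ∫ x, f x ∂(γ : Measure Y) - logMGF γ₀ f :=
  (ProbabilityMeasure.continuous_integral_boundedContinuousFunction f).sub continuous_const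

variable [TopologicalSpace Y] [PolishSpace Y] [BorelSpace Y]

/-- Exponential tightness: for every level there is a compact set of probability measures that
contains the corresponding entropy sublevel set and is left by the empirical measure with
exponentially small probability. The compact set is `{γ | ∀ m, γ (K m)ᶜ ≤ 1 / k m}`, with
`K m` compact and `k m = m + M + 1`. -/
lemma exists_compact_expTight (γ₀ : ProbabilityMeasure Y) (a : ℝ) :
    ∃ T : Set (ProbabilityMeasure Y), IsCompact T ∧
      (∀ γ : ProbabilityMeasure Y, relEnt (γ : Measure Y) γ₀ ≤ (a : EReal) → γ ∈ T) ∧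
      ∀ N : ℕ, iidLaw (γ₀ : Measure Y) N {y | empir y ∉ T} ≤
        ENNReal.ofReal (Real.exp (-(((N : ℝ) + 1) * a))) := by
  let := TopologicalSpace.upgradeIsCompletelyMetrizable Y
  obtain ⟨M, hM⟩ := exists_nat_ge |a|
  have haM : a ≤ M := (le_abs_self _).trans hM
  have hex : ∀ m : ℕ, ∃ K : Set Y, IsCompact K ∧
      (γ₀ : Measure Y).real Kᶜ ≤ Real.exp (-(2 * ((m : ℝ) + M + 1) ^ 2)) := by
    intro m
    obtain ⟨K, hK, hK'⟩ := isTightMeasureSet_iff_exists_isCompact_measure_compl_le.1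
      (isTightMeasureSet_singleton (μ := (γ₀ : Measure Y)))
      (ENNReal.ofReal (Real.exp (-(2 * ((m : ℝ) + M + 1) ^ 2))))
      (ENNReal.ofReal_pos.2 (Real.exp_pos _))
    refine ⟨K, hK, ?_⟩
    exact ENNReal.toReal_le_of_le_ofReal (Real.exp_pos _).le (hK' _ rfl)
  choose K hK hKm using hex
  -- With `M ≥ |a|`, the choice `k m = m + M + 1` makes the sum over `m` of the Chernoff bounds
  -- `exp (-(N + 1) k m)` at most `exp (-(N + 1) a)`.
  let k : ℕ → ℝ := fun m => (m : ℝ) + M + 1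
  have hk1 : ∀ m, 1 ≤ k m := fun m => by
    have h1 : (0 : ℝ) ≤ m := m.cast_nonneg
    have h2 : (0 : ℝ) ≤ M := M.cast_nonneg
    simp only [k]; linarith
  have hkM : ∀ m, (M : ℝ) + 1 ≤ k m := fun m => by
    have h1 : (0 : ℝ) ≤ m := m.cast_nonneg
    simp only [k]; linarith
  let u : ℕ → ℝ≥0 := fun m => Real.toNNReal ((k m)⁻¹)
  have hu : Tendsto u atTop (𝓝 0) := by
    have h1 : Tendsto k atTop atTop := by
      refine tendsto_atTop_mono (fun m => ?_) (tendsto_natCast_atTop_atTop (R := ℝ))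
      have h2 : (0 : ℝ) ≤ M := M.cast_nonneg
      simp only [k]; linarith
    have h3 := (continuous_real_toNNReal.tendsto 0).comp (tendsto_inv_atTop_zero.comp h1)
    rw [Real.toNNReal_zero] at h3
    exact h3
  have hmem : ∀ (γ : ProbabilityMeasure Y) m, γ (K m)ᶜ ≤ u m ↔
      (γ : Measure Y).real (K m)ᶜ ≤ (k m)⁻¹ := by
    intro γ m
    have h0 : 0 ≤ (k m)⁻¹ := inv_nonneg.2 (by linarith [hk1 m])
    rw [← NNReal.coe_le_coe, Real.coe_toNNReal _ h0]
    rfl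
  have hfacts := fun m => tiltFun_facts (hK m).measurableSet (hKm m)
  refine ⟨{γ | ∀ m, γ (K m)ᶜ ≤ u m},
    isCompact_setOfPred_probabilityMeasure_mass_eq_compl_isCompact_le hu hK
      (Or.inl inferInstance), ?_, ?_⟩
  · intro γ hγ m
    rw [hmem]
    obtain ⟨h1, h2, h3, h4⟩ := hfacts m
    have h5 := gibbs hγ h1 h2
    rw [h4] at h5
    have hkp : 0 < k m := by linarith [hk1 m]
    have h6 : 2 * k m ^ 2 * (γ : Measure Y).real (K m)ᶜ ≤ 2 * k m := by
      have := hkM m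
      have := hk1 m
      change 2 * k m ^ 2 * (γ : Measure Y).real (K m)ᶜ - _ ≤ _ at h5
      linarith
    rw [← one_div, le_div_iff₀ hkp]
    nlinarith
  · intro N
    have hsub : {y : Fin (N + 1) → Y | empir y ∉ {γ : ProbabilityMeasure Y | ∀ m, γ (K m)ᶜ ≤ u m}}
        ⊆ ⋃ m, {y | k m ≤ ∫ x, tiltFun (K m) (k m) x ∂(empir y : Measure Y) -
          logMGF (γ₀ : Measure Y) (tiltFun (K m) (k m))} := by
      intro y hy
      simp only [Set.mem_ofPred_eq, not_forall] at hy
      obtain ⟨m, hm⟩ := hy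
      rw [hmem, not_le] at hm
      refine Set.mem_iUnion.2 ⟨m, ?_⟩
      obtain ⟨h1, h2, h3, h4⟩ := hfacts m
      have hkp : 0 < k m := by linarith [hk1 m]
      rw [inv_lt_iff_one_lt_mul₀' hkp] at hm
      have h4' := h4 (empir y)
      change ∫ x, tiltFun (K m) (k m) x ∂(empir y : Measure Y) = 2 * k m ^ 2 * _ at h4'
      change logMGF _ (tiltFun (K m) (k m)) ≤ 1 at h3
      simp only [Set.mem_ofPred_eq, h4']
      nlinarith [hk1 m]
    refine (measure_mono hsub).trans ((measure_iUnion_le _).trans ?_)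
    have hE := Real.exp_pos (-(((N : ℝ) + 1) * a))
    have hbd : ∀ m : ℕ, iidLaw (γ₀ : Measure Y) N
        {y | k m ≤ ∫ x, tiltFun (K m) (k m) x ∂(empir y : Measure Y) -
          logMGF (γ₀ : Measure Y) (tiltFun (K m) (k m))} ≤
        ENNReal.ofReal (Real.exp (-(((N : ℝ) + 1) * a)) * (1 / 2 / 2 ^ m)) := by
      intro m
      obtain ⟨h1, h2, h3, h4⟩ := hfacts m
      refine (chernoff h1 h2 (k m) N).trans (ENNReal.ofReal_le_ofReal ?_)
      have h5 : Real.exp (-1) ≤ 1 / 2 := by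
        rw [Real.exp_neg, ← one_div]
        exact one_div_le_one_div_of_le (by norm_num) (by linarith [Real.add_one_le_exp 1])
      have h6 : (1 : ℝ) / 2 / 2 ^ m = (1 / 2) ^ (m + 1) := by
        rw [pow_succ, div_pow, one_pow]; ring
      have h7 : Real.exp (-1) ^ (m + 1) ≤ (1 / 2) ^ (m + 1) :=
        pow_le_pow_left₀ (Real.exp_pos _).le h5 _
      rw [h6]
      refine le_trans ?_ (mul_le_mul_of_nonneg_left h7 hE.le)
      rw [← Real.exp_nat_mul, ← Real.exp_add, Real.exp_le_exp]
      push_cast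
      have hN : (0 : ℝ) ≤ N := N.cast_nonneg
      have hm0 : (0 : ℝ) ≤ m := m.cast_nonneg
      simp only [k]
      nlinarith [mul_nonneg hN hm0, mul_nonneg hN (sub_nonneg.2 haM)]
    refine (ENNReal.tsum_le_tsum hbd).trans ?_
    rw [← ENNReal.ofReal_tsum_of_nonneg (fun m => by positivity)
      ((summable_geometric_two' 1).mul_left _), tsum_mul_left, tsum_geometric_two' 1, mul_one]

/-- Donsker-Varadhan formula over bounded continuous functions, which exhibits the relative entropy
as a supremum of continuous functions of its first argument. -/
lemma relEnt_le_iff (γ γ₀ : ProbabilityMeasure Y) (c : ℝ) :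
    relEnt (γ : Measure Y) γ₀ ≤ (c : EReal) ↔
      ∀ g : BoundedContinuousFunction Y ℝ, ∫ y, g y ∂(γ : Measure Y) - logMGF γ₀ g ≤ c :=
  ⟨fun h g => gibbs h g.continuous.measurable (M := ‖g‖) fun y => g.norm_coe_le_norm y,
    fun h => relEnt_le_of_dv fun _ hf _ hM => dv_extend h hf hM⟩

/-- Relative entropy is a good rate function: its sublevel sets are closed by duality and
contained in a compact set by exponential tightness. -/
lemma isCompact_sublevel (γ₀ : ProbabilityMeasure Y) (c : ℝ) :
    IsCompact {γ : ProbabilityMeasure Y | relEnt (γ : Measure Y) γ₀ ≤ (c : EReal)} := by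
  obtain ⟨T, hT, hsub, -⟩ := exists_compact_expTight γ₀ c
  refine hT.of_isClosed_subset ?_ hsub
  simp only [relEnt_le_iff, Set.ofPred_forall]
  exact isClosed_iInter fun g => isClosed_le (continuous_dual _ g) continuous_const

/-- Upper bound of Sanov's theorem, at the level of probabilities. The part of `C` inside a compact
set is covered by finitely many tilted half-spaces, each estimated by Chernoff's bound; the rest is
negligible by exponential tightness. -/
lemma sanov_upper (γ₀ : ProbabilityMeasure Y) {C : Set (ProbabilityMeasure Y)} (hC : IsClosed C)
    {a : ℝ} (ha : ∀ γ ∈ C, (a : EReal) < relEnt (γ : Measure Y) γ₀) :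
    ∃ k : ℝ, 0 < k ∧ ∀ N : ℕ, iidLaw (γ₀ : Measure Y) N {y | empir y ∈ C} ≤
      ENNReal.ofReal (k * Real.exp (-(((N : ℝ) + 1) * a))) := by
  obtain ⟨T, hT, -, hTN⟩ := exists_compact_expTight γ₀ a
  let V : BoundedContinuousFunction Y ℝ → Set (ProbabilityMeasure Y) := fun g =>
    {γ | a < ∫ y, g y ∂(γ : Measure Y) - logMGF γ₀ g}
  obtain ⟨t, ht⟩ := (hT.inter_right hC).elim_finite_subcover V
    (fun g => isOpen_lt continuous_const (continuous_dual _ g)) (fun γ hγ => by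
      have h1 := (ha γ hγ.2).not_ge
      rw [relEnt_le_iff] at h1
      push Not at h1
      exact Set.mem_iUnion.2 h1)
  refine ⟨t.card + 1, by positivity, fun N => ?_⟩
  set E := Real.exp (-(((N : ℝ) + 1) * a)) with hE
  have hE0 : 0 ≤ E := (Real.exp_pos _).le
  have hsub : {y : Fin (N + 1) → Y | empir y ∈ C} ⊆
      (⋃ g ∈ t, {y | a ≤ ∫ x, g x ∂(empir y : Measure Y) - logMGF (γ₀ : Measure Y) g}) ∪
        {y | empir y ∉ T} := by
    intro y hy
    by_cases hyT : empir y ∈ T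
    · left
      have h1 := ht ⟨hyT, hy⟩
      simp only [Set.mem_iUnion] at h1 ⊢
      obtain ⟨g, hg, h2⟩ := h1
      exact ⟨g, hg, (show a < _ from h2).le⟩
    · exact Or.inr hyT
  refine (measure_mono hsub).trans ((measure_union_le _ _).trans ?_)
  have h1 : iidLaw (γ₀ : Measure Y) N
      (⋃ g ∈ t, {y | a ≤ ∫ x, g x ∂(empir y : Measure Y) - logMGF (γ₀ : Measure Y) g}) ≤
      t.card * ENNReal.ofReal E := by
    refine (measure_biUnion_finset_le _ _).trans ?_
    refine (Finset.sum_le_card_nsmul _ _ (ENNReal.ofReal E) fun g _ => ?_).trans (by simp)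
    exact chernoff g.continuous.measurable (M := ‖g‖) (fun y => g.norm_coe_le_norm y) a N
  refine (add_le_add h1 (hTN N)).trans (le_of_eq ?_)
  rw [← hE, add_mul (t.card : ℝ), one_mul, ENNReal.ofReal_add (by positivity) hE0,
    ENNReal.ofReal_mul (by positivity), ENNReal.ofReal_natCast]

end empirical

/-! ### Change of measure and Sanov's lower bound -/

section lower

variable {Y : Type*} [MeasurableSpace Y]

/-- A power of a measure with density has the product density. -/
lemma pi_withDensity {ι : Type*} [Fintype ι] {μ : Measure Y} [IsProbabilityMeasure μ]
    {ρ : Y → ℝ≥0∞} (hρ : Measurable ρ) [SigmaFinite (μ.withDensity ρ)] :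
    Measure.pi (fun _ : ι => μ.withDensity ρ) =
      (Measure.pi fun _ : ι => μ).withDensity fun y => ∏ i, ρ (y i) := by
  refine Measure.pi_eq fun s hs => ?_
  rw [withDensity_apply _ (MeasurableSet.univ_pi hs),
    ← lintegral_indicator (MeasurableSet.univ_pi hs)]
  have h1 : (Set.univ.pi s).indicator (fun y : ι → Y => ∏ i, ρ (y i)) =
      fun y => ∏ i, (s i).indicator ρ (y i) := by
    ext y
    by_cases hy : y ∈ Set.univ.pi s
    · rw [Set.indicator_of_mem hy]
      exact Finset.prod_congr rfl fun i _ => (Set.indicator_of_mem (hy i trivial) _).symm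
    · rw [Set.indicator_of_notMem hy]
      simp only [Set.mem_univ_pi, not_forall] at hy
      obtain ⟨i, hi⟩ := hy
      exact (Finset.prod_eq_zero (Finset.mem_univ i) (Set.indicator_of_notMem hi _)).symm
  have hm : ∀ i, Measurable ((s i).indicator ρ) := fun i => hρ.indicator (hs i)
  rw [h1, lintegral_prod_eq_prod_lintegral_of_indepFun Finset.univ
    (fun i (y : ι → Y) => (s i).indicator ρ (y i))
    (iIndepFun_pi (fun i => (hm i).aemeasurable)) (fun i => (hm i).comp (measurable_pi_apply i))]
  refine Finset.prod_congr rfl fun i _ => ?_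
  rw [withDensity_apply _ (hs i), ← lintegral_indicator (hs i)]
  exact (measurePreserving_eval (fun _ : ι => μ) i).lintegral_comp (hm i)

/-- Weak law of large numbers on the finite product spaces, deduced from the strong law on the
infinite product. -/
lemma weak_law {γ : Measure Y} [IsProbabilityMeasure γ] {h : Y → ℝ} (hm : Measurable h)
    (hi : Integrable h γ) {δ : ℝ} (hδ : 0 < δ) :
    Tendsto (fun N : ℕ => iidLaw γ N
      {y | δ ≤ |((N : ℝ) + 1)⁻¹ * ∑ i, h (y i) - ∫ x, h x ∂γ|}) atTop (𝓝 0) := by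
  let Q : Measure (ℕ → Y) := Measure.infinitePi fun _ => γ
  have hev : ∀ i : ℕ, MeasurePreserving (fun ω : ℕ → Y => ω i) Q γ := fun i =>
    measurePreserving_eval_infinitePi (fun _ : ℕ => γ) i
  let X : ℕ → (ℕ → Y) → ℝ := fun i ω => h (ω i)
  have hXm : ∀ i, Measurable (X i) := fun i => hm.comp (measurable_pi_apply i)
  have hind : iIndepFun X Q := iIndepFun_infinitePi fun _ => hm
  have hident : ∀ i, IdentDistrib (X i) (X 0) Q Q := fun i =>
    ⟨(hXm i).aemeasurable, (hXm 0).aemeasurable, by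
      have hmap : ∀ j, Q.map (X j) = γ.map h := fun j => by
        rw [← (hev j).map_eq, Measure.map_map hm (measurable_pi_apply j)]; rfl
      rw [hmap, hmap]⟩
  have hint : Integrable (X 0) Q := (hev 0).integrable_comp_of_integrable hi
  have hmean : ∫ ω, X 0 ω ∂Q = ∫ x, h x ∂γ := by
    rw [← (hev 0).map_eq, integral_map (measurable_pi_apply 0).aemeasurable
      hm.aestronglyMeasurable]
  have hslln := strong_law_ae_real X hint (fun i j hij => hind.indepFun hij) hident
  rw [hmean] at hslln
  have hmeas := tendstoInMeasure_of_tendsto_ae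
    (f := fun n ω => (∑ i ∈ Finset.range n, X i ω) / n) (g := fun _ => ∫ x, h x ∂γ)
    (fun n => (Measurable.div_const (Finset.measurable_sum _ fun i _ => hXm i)
      _).aestronglyMeasurable) hslln
  rw [tendstoInMeasure_iff_norm] at hmeas
  refine ((hmeas δ hδ).comp (tendsto_add_atTop_nat 1)).congr fun N => ?_
  have hmp : Measure.map (fun (ω : ℕ → Y) (i : Fin (N + 1)) => ω i) Q = iidLaw γ N := by
    have := Measure.map_infinitePi_infinitePi_of_inj (P := fun _ : ℕ => γ)
      (f := fun i : Fin (N + 1) => (i : ℕ)) Fin.val_injective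
    exact this.trans (Measure.infinitePi_eq_pi _)
  rw [← hmp, Measure.map_apply (by fun_prop) (measurableSet_le (by fun_prop) (by fun_prop))]
  simp only [Function.comp_apply]
  congr 1
  ext ω
  simp only [Set.mem_ofPred_eq, Set.mem_preimage, Real.norm_eq_abs, X]
  rw [Finset.sum_range, div_eq_inv_mul]
  push_cast
  rfl

/-- The filter on `P(Y)` of the sets that contain the empirical measure of i.i.d. samples from
`γ` with probability tending to one. -/
def empirFilter (γ : Measure Y) : Filter (ProbabilityMeasure Y) where
  sets := {S | Tendsto (fun N : ℕ => iidLaw γ N {y | empir y ∉ S}) atTop (𝓝 0)}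
  univ_sets := by simp
  sets_of_superset := by
    intro S T hS hST
    exact tendsto_of_tendsto_of_tendsto_of_le_of_le tendsto_const_nhds hS (fun _ => zero_le)
      fun N => measure_mono fun y hy hyS => hy (hST hyS)
  inter_sets := by
    intro S T hS hT
    have h := Tendsto.add hS hT
    rw [add_zero] at h
    refine tendsto_of_tendsto_of_tendsto_of_le_of_le tendsto_const_nhds h (fun _ => zero_le)
      fun N => (measure_mono fun y hy => ?_).trans (measure_union_le _ _)
    by_contra hc
    simp only [Set.mem_union, Set.mem_ofPred_eq, not_or, not_not] at hc
    exact hy hc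

variable [TopologicalSpace Y]

/-- The empirical measures of i.i.d. samples from `γ` converge to `γ` in probability. Weak
convergence is tested on one bounded continuous function at a time, which reduces the claim to
the weak law for real random variables. -/
lemma empirFilter_le [OpensMeasurableSpace Y] (γ : ProbabilityMeasure Y) :
    empirFilter (γ : Measure Y) ≤ 𝓝 γ := by
  suffices h : Tendsto (fun ν : ProbabilityMeasure Y => ν) (empirFilter (γ : Measure Y)) (𝓝 γ) from
    tendsto_id'.1 h
  rw [ProbabilityMeasure.tendsto_iff_forall_integral_tendsto]
  intro f
  rw [Metric.tendsto_nhds]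
  intro δ hδ
  refine (weak_law f.continuous.measurable (f.integrable (γ : Measure Y)) hδ).congr fun N => ?_
  congr 1
  ext y
  simp only [Set.mem_ofPred_eq, not_lt, Real.dist_eq, integral_empir y f.continuous.measurable]

variable [PolishSpace Y] [BorelSpace Y]

/-- Lower bound of Sanov's theorem: sampling from `γ` instead of `γ₀` makes the event typical,
and on the set where the average log-likelihood ratio is at most `r + ε` the density of the
change of measure is at most `exp ((N + 1) (r + ε))`. -/
lemma sanov_lower (γ₀ γ : ProbabilityMeasure Y) {r : ℝ}
    (hr : relEnt (γ : Measure Y) γ₀ ≤ (r : EReal)) {U : Set (ProbabilityMeasure Y)}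
    (hU : IsOpen U) (hγU : γ ∈ U) {ε : ℝ} (hε : 0 < ε) :
    ∀ᶠ N : ℕ in atTop, ENNReal.ofReal (1 / 2 * Real.exp (-(((N : ℝ) + 1) * (r + ε)))) ≤
      iidLaw (γ₀ : Measure Y) N {y | empir y ∈ U} := by
  obtain ⟨hac, hint, hle⟩ := exists_of_relEnt_le hr
  set ℓ := llr (γ : Measure Y) γ₀ with hℓ
  have hℓm : Measurable ℓ := measurable_llr _ _
  -- A finite version of the density; it is bounded by `e^ℓ` everywhere, also where it vanishes and
  -- `ℓ = 0` by the convention `log 0 = 0`.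
  let p : Y → ℝ≥0∞ := fun y => ENNReal.ofReal ((γ : Measure Y).rnDeriv γ₀ y).toReal
  have hpm : Measurable p := (Measure.measurable_rnDeriv _ _).ennreal_toReal.ennreal_ofReal
  have hγ : (γ₀ : Measure Y).withDensity p = γ := by
    conv_rhs => rw [← Measure.withDensity_rnDeriv_eq _ _ hac]
    refine withDensity_congr_ae ?_
    filter_upwards [Measure.rnDeriv_lt_top (γ : Measure Y) γ₀] with y hy
    exact ENNReal.ofReal_toReal hy.ne
  have : SigmaFinite ((γ₀ : Measure Y).withDensity p) := by rw [hγ]; infer_instance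
  have hp_le : ∀ y, p y ≤ ENNReal.ofReal (Real.exp (ℓ y)) := by
    intro y
    refine ENNReal.ofReal_le_ofReal ?_
    rcases ENNReal.toReal_nonneg (a := (γ : Measure Y).rnDeriv γ₀ y) |>.eq_or_lt with h0 | h0
    · rw [← h0]; exact (Real.exp_pos _).le
    · rw [hℓ, llr, Real.exp_log h0]
  have h1 : Tendsto (fun N : ℕ => iidLaw (γ : Measure Y) N {y | empir y ∉ U}) atTop (𝓝 0) :=
    empirFilter_le γ (hU.mem_nhds hγU)
  have h2 := h1.add (weak_law hℓm hint hε)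
  rw [add_zero] at h2
  have h3 := h2.eventually (gt_mem_nhds (show (0 : ℝ≥0∞) < 1 / 2 by simp))
  filter_upwards [h3] with N hN
  set B := {y : Fin (N + 1) → Y | empir y ∉ U} with hB
  set B' := {y : Fin (N + 1) → Y | ε ≤ |((N : ℝ) + 1)⁻¹ * ∑ i, ℓ (y i) -
    ∫ x, ℓ x ∂(γ : Measure Y)|} with hB'
  have hBm : MeasurableSet B := (hU.preimage (continuous_empir N)).measurableSet.compl
  have hB'm : MeasurableSet B' := measurableSet_le (by fun_prop) (by fun_prop)
  set A := (B ∪ B')ᶜ with hA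
  have hAm : MeasurableSet A := (hBm.union hB'm).compl
  have hhalf : ENNReal.ofReal (1 / 2) ≤ iidLaw (γ : Measure Y) N A := by
    rw [hA, prob_compl_eq_one_sub (hBm.union hB'm)]
    have h4 : iidLaw (γ : Measure Y) N (B ∪ B') ≤ 1 / 2 := (measure_union_le _ _).trans hN.le
    refine le_trans ?_ (tsub_le_tsub_left h4 1)
    rw [one_div, one_div, ENNReal.ofReal_inv_of_pos two_pos, ENNReal.one_sub_inv_two]
    simp
  have hN0 : (0 : ℝ) < (N : ℝ) + 1 := by positivity
  have hchange : iidLaw (γ : Measure Y) N A ≤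
      ENNReal.ofReal (Real.exp (((N : ℝ) + 1) * (r + ε))) * iidLaw (γ₀ : Measure Y) N A := by
    have h5 : iidLaw (γ : Measure Y) N =
        (iidLaw (γ₀ : Measure Y) N).withDensity fun y => ∏ i, p (y i) := by
      rw [← pi_withDensity hpm, hγ]
    rw [h5, withDensity_apply _ hAm, ← setLIntegral_const]
    refine setLIntegral_mono' hAm fun y hy => ?_
    refine (Finset.prod_le_prod' fun i _ => hp_le (y i)).trans ?_
    rw [← ENNReal.ofReal_prod_of_nonneg fun i _ => (Real.exp_pos _).le, ← Real.exp_sum]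
    refine ENNReal.ofReal_le_ofReal (Real.exp_le_exp.2 ?_)
    have h6 : y ∉ B' := fun h => hy (Or.inr h)
    simp only [hB', Set.mem_ofPred_eq, not_le] at h6
    have h7 := (le_abs_self _).trans_lt h6
    have h8 : ((N : ℝ) + 1)⁻¹ * ∑ i, ℓ (y i) ≤ r + ε := by linarith
    have h9 := mul_le_mul_of_nonneg_left h8 hN0.le
    rwa [mul_inv_cancel_left₀ hN0.ne'] at h9
  have hAU : iidLaw (γ₀ : Measure Y) N A ≤ iidLaw (γ₀ : Measure Y) N {y | empir y ∈ U} := by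
    refine measure_mono fun y hy => ?_
    by_contra hc
    exact hy (Or.inl hc)
  refine le_trans ?_ hAU
  rw [Real.exp_neg, ← div_eq_mul_inv, ENNReal.ofReal_div_of_pos (Real.exp_pos _)]
  refine ENNReal.div_le_of_le_mul ?_
  rw [mul_comm]
  exact hhalf.trans hchange

end lower

/-! ### From exponential bounds to logarithmic rates -/

section rates

lemma rate_eq {k a : ℝ} (hk : 0 < k) {N : ℕ} :
    ((((N : ℝ) + 1)⁻¹ : ℝ) : EReal) *
      ENNReal.log (ENNReal.ofReal (k * Real.exp (-(((N : ℝ) + 1) * a)))) =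
      ((((N : ℝ) + 1)⁻¹ * Real.log k - a : ℝ) : EReal) := by
  have hN0 : (0 : ℝ) < (N : ℝ) + 1 := by positivity
  rw [ENNReal.log_ofReal_of_pos (by positivity), ← EReal.coe_mul,
    Real.log_mul hk.ne' (Real.exp_pos _).ne', Real.log_exp]
  congr 1
  field_simp
  ring

lemma tendsto_rate (k a : ℝ) :
    Tendsto (fun N : ℕ => ((((N : ℝ) + 1)⁻¹ * Real.log k - a : ℝ) : EReal)) atTop
      (𝓝 ((-a : ℝ) : EReal)) := by
  refine (continuous_coe_real_ereal.tendsto _).comp ?_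
  have h : Tendsto (fun N : ℕ => ((N : ℝ) + 1)⁻¹) atTop (𝓝 0) :=
    tendsto_inv_atTop_zero.comp (tendsto_atTop_add_const_right _ 1 tendsto_natCast_atTop_atTop)
  simpa using (h.mul_const (Real.log k)).sub_const a

/-- An exponential upper bound on probabilities, in `limsup` form. -/
lemma limsup_rate {p : ℕ → ℝ≥0∞} {k a : ℝ} (hk : 0 < k)
    (h : ∀ᶠ N : ℕ in atTop, p N ≤ ENNReal.ofReal (k * Real.exp (-(((N : ℝ) + 1) * a)))) :
    limsup (fun N : ℕ => ((((N : ℝ) + 1)⁻¹ : ℝ) : EReal) * ENNReal.log (p N)) atTop ≤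
      ((-a : ℝ) : EReal) := by
  have hlim := tendsto_rate k a
  rw [← hlim.limsup_eq]
  refine limsup_le_limsup ?_ (by isBoundedDefault) (by isBoundedDefault)
  filter_upwards [h] with N hN
  rw [← rate_eq hk]
  exact mul_le_mul_of_nonneg_left (ENNReal.log_monotone hN)
    (by exact_mod_cast (by positivity : (0 : ℝ) ≤ ((N : ℝ) + 1)⁻¹))

/-- An exponential lower bound on probabilities, in `liminf` form. -/
lemma liminf_rate {p : ℕ → ℝ≥0∞} {k a : ℝ} (hk : 0 < k)
    (h : ∀ᶠ N : ℕ in atTop, ENNReal.ofReal (k * Real.exp (-(((N : ℝ) + 1) * a))) ≤ p N) :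
    ((-a : ℝ) : EReal) ≤
      liminf (fun N : ℕ => ((((N : ℝ) + 1)⁻¹ : ℝ) : EReal) * ENNReal.log (p N)) atTop := by
  have hlim := tendsto_rate k a
  rw [← hlim.liminf_eq]
  refine liminf_le_liminf ?_ (by isBoundedDefault) (by isBoundedDefault)
  filter_upwards [h] with N hN
  rw [← rate_eq hk]
  exact mul_le_mul_of_nonneg_left (ENNReal.log_monotone hN)
    (by exact_mod_cast (by positivity : (0 : ℝ) ≤ ((N : ℝ) + 1)⁻¹))

end rates

/-! ### Contraction along a partially defined map -/

section contraction

variable {X Y : Type*} [MeasurableSpace X] [MeasurableSpace Y]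

/-- The rate function obtained by contracting the relative entropy along the partial map `g`
with domain `D`. -/
noncomputable def contractedRate (γ₀ : ProbabilityMeasure Y) (D : Set (ProbabilityMeasure Y))
    (g : ProbabilityMeasure Y → ProbabilityMeasure X) (η : ProbabilityMeasure X) : EReal :=
  ⨅ γ : {γ : ProbabilityMeasure Y // γ ∈ D ∧ g γ = η}, relEnt (γ.1 : Measure Y) (γ₀ : Measure Y)

lemma contractedRate_le {γ₀ : ProbabilityMeasure Y} {D : Set (ProbabilityMeasure Y)}
    {g : ProbabilityMeasure Y → ProbabilityMeasure X} {γ : ProbabilityMeasure Y} (hγ : γ ∈ D) :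
    contractedRate γ₀ D g (g γ) ≤ relEnt (γ : Measure Y) γ₀ :=
  iInf_le (fun γ' : {γ' : ProbabilityMeasure Y // γ' ∈ D ∧ g γ' = g γ} =>
    relEnt (γ'.1 : Measure Y) (γ₀ : Measure Y)) ⟨γ, hγ, rfl⟩

variable [TopologicalSpace Y] [PolishSpace Y] [BorelSpace Y]

/-- Almost surely the empirical measure of the particles is the image under `μ*` of the empirical
measure of the noise: it solves the fixed point equation for that noise measure. -/
lemma ae_empir_eq [MeasurableSpace (ProbabilityMeasure X)] [MeasurableSpace (ProbabilityMeasure Y)]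
    [BorelSpace (ProbabilityMeasure Y)] {γ₀ : ProbabilityMeasure Y}
    {ψ : ProbabilityMeasure X → Y → X} (hψ : Measurable (Function.uncurry ψ))
    {D : Set (ProbabilityMeasure Y)} (hD : MeasurableSet D)
    {g : ProbabilityMeasure Y → ProbabilityMeasure X}
    (hg : ∀ γ ∈ D, ∀ μ : ProbabilityMeasure X,
        Measure.map (ψ μ) (γ : Measure Y) = (μ : Measure X) → μ = g γ)
    {N : ℕ} (hND : iidLaw (γ₀ : Measure Y) N {y | empir y ∈ D} = 1)
    {Ω : Type*} [MeasurableSpace Ω] {P : Measure Ω} {ys : Fin (N + 1) → Ω → Y}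
    (hym : ∀ i, Measurable (ys i))
    (hlaw : Measure.map (fun ω => fun i => ys i ω) P = iidLaw (γ₀ : Measure Y) N)
    {xs : Fin (N + 1) → Ω → X}
    (hrep : ∀ᵐ ω ∂P, ∀ i, xs i ω = ψ (empir fun j => xs j ω) (ys i ω)) :
    ∀ᵐ ω ∂P, empir (fun i => ys i ω) ∈ D ∧
      empir (fun i => xs i ω) = g (empir fun i => ys i ω) := by
  have hm : Measurable (fun ω => fun i => ys i ω) := measurable_pi_lambda _ hym
  have hDm : MeasurableSet {y : Fin (N + 1) → Y | empir y ∈ D} :=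
    (continuous_empir N).measurable hD
  have h1 : ∀ᵐ y ∂(iidLaw (γ₀ : Measure Y) N), empir y ∈ D := by
    rw [← mem_ae_iff_prob_eq_one hDm] at hND
    exact hND
  rw [← hlaw] at h1
  filter_upwards [ae_of_ae_map hm.aemeasurable h1, hrep] with ω h1 h2
  refine ⟨h1, hg _ h1 _ ?_⟩
  have hψm : Measurable (ψ (empir fun j => xs j ω)) := hψ.of_uncurry_left
  set μ := empir fun j => xs j ω with hμ
  have h3 : (fun j => xs j ω) = fun j => ψ μ (ys j ω) := funext h2
  have h4 : (μ : Measure X) = (((N : ℝ≥0∞) + 1))⁻¹ • ∑ i, Measure.dirac (ψ μ (ys i ω)) := by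
    conv_lhs => rw [hμ, h3]
    rfl
  rw [h4]
  change Measure.map (ψ μ) ((((N : ℝ≥0∞) + 1))⁻¹ • ∑ i, Measure.dirac (ys i ω)) = _
  rw [Measure.map_smul, Measure.map_finset_sum hψm.aemeasurable]
  simp only [Measure.map_dirac' hψm]

variable [TopologicalSpace X] [BorelSpace X]

/-- Upper bound. A finite-entropy point of the closure of `D ∩ g⁻¹(F)`, for closed `F`, lies in
`D ∩ g⁻¹(F)`, so closing this set before applying Sanov's theorem does not change the rate. -/
lemma contraction_upper {γ₀ : ProbabilityMeasure Y} {D : Set (ProbabilityMeasure Y)}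
    {g : ProbabilityMeasure Y → ProbabilityMeasure X}
    (hg : ∀ γ : ProbabilityMeasure Y, relEnt (γ : Measure Y) (γ₀ : Measure Y) < ⊤ →
      γ ∈ D ∧ ContinuousWithinAt g D γ)
    {F : Set (ProbabilityMeasure X)} (hF : IsClosed F) {p : ℕ → ℝ≥0∞}
    (hp : ∀ N, p N ≤ iidLaw (γ₀ : Measure Y) N {y | empir y ∈ closure (D ∩ g ⁻¹' F)}) :
    limsup (fun N : ℕ => ((((N : ℝ) + 1)⁻¹ : ℝ) : EReal) * ENNReal.log (p N)) atTop ≤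
      -(⨅ η ∈ F, contractedRate γ₀ D g η) := by
  rw [EReal.le_neg]
  refine EReal.ge_of_forall_gt_iff_ge.1 fun a ha => ?_
  rw [EReal.le_neg]
  have hC : ∀ γ ∈ closure (D ∩ g ⁻¹' F), (a : EReal) < relEnt (γ : Measure Y) γ₀ := by
    intro γ hγ
    rcases eq_or_ne (relEnt (γ : Measure Y) (γ₀ : Measure Y)) ⊤ with htop | htop
    · rw [htop]; exact EReal.coe_lt_top a
    obtain ⟨hγD, hcont⟩ := hg γ (lt_top_iff_ne_top.2 htop)
    have hγF : g γ ∈ F := by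
      have h1 := (hcont.mono Set.inter_subset_left).mem_closure_image hγ
      refine closure_minimal ?_ hF h1
      rintro _ ⟨γ', h, rfl⟩
      exact h.2
    exact (ha.trans_le (iInf₂_le _ hγF)).trans_le (contractedRate_le hγD)
  obtain ⟨k, hk, h⟩ := sanov_upper γ₀ isClosed_closure hC
  exact limsup_rate hk (Eventually.of_forall fun N => (hp N).trans (h N))

/-- Lower bound. Near a finite-entropy point `γ` with `g γ` in the open set `G`, continuity of
`g` on `D` provides an open neighbourhood of `γ` on which Sanov's lower bound applies. -/
lemma contraction_lower {γ₀ : ProbabilityMeasure Y} {D : Set (ProbabilityMeasure Y)}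
    {g : ProbabilityMeasure Y → ProbabilityMeasure X}
    (hg : ∀ γ : ProbabilityMeasure Y, relEnt (γ : Measure Y) (γ₀ : Measure Y) < ⊤ →
      γ ∈ D ∧ ContinuousWithinAt g D γ)
    {G : Set (ProbabilityMeasure X)} (hG : IsOpen G) {p : ℕ → ℝ≥0∞}
    (hp : ∀ U : Set (ProbabilityMeasure Y), IsOpen U → U ∩ D ⊆ g ⁻¹' G →
      ∀ N, iidLaw (γ₀ : Measure Y) N {y | empir y ∈ U} ≤ p N) :
    -(⨅ η ∈ G, contractedRate γ₀ D g η) ≤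
      liminf (fun N : ℕ => ((((N : ℝ) + 1)⁻¹ : ℝ) : EReal) * ENNReal.log (p N)) atTop := by
  rw [EReal.neg_le]
  refine le_iInf₂ fun η hη => le_iInf ?_
  rintro ⟨γ, hγD, rfl⟩
  refine EReal.le_of_forall_lt_iff_le.1 fun r hr => ?_
  rw [EReal.neg_le]
  have hlt : relEnt (γ : Measure Y) (γ₀ : Measure Y) < ⊤ := hr.trans (EReal.coe_lt_top r)
  obtain ⟨r', hr', hr'r⟩ := EReal.lt_iff_exists_real_btwn.1 hr
  obtain ⟨U, hU, hγU, hUD⟩ := mem_nhdsWithin.1 ((hg γ hlt).2 (hG.mem_nhds hη))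
  have hε : 0 < r - r' := sub_pos.2 (EReal.coe_lt_coe_iff.1 hr'r)
  have h := sanov_lower γ₀ γ hr'.le hU hγU hε
  rw [add_sub_cancel] at h
  exact liminf_rate (by norm_num) (h.mono fun N hN => hN.trans (hp U hU hUD N))

variable [PolishSpace X]

/-- Sublevel sets of the contracted rate are intersections of images of the compact entropy
balls, on which `g` is continuous. -/
lemma isCompact_contractedRate {γ₀ : ProbabilityMeasure Y} {D : Set (ProbabilityMeasure Y)}
    {g : ProbabilityMeasure Y → ProbabilityMeasure X}
    (hg : ∀ γ : ProbabilityMeasure Y, relEnt (γ : Measure Y) (γ₀ : Measure Y) < ⊤ →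
      γ ∈ D ∧ ContinuousWithinAt g D γ) (c : ℝ) :
    IsCompact {η | contractedRate γ₀ D g η ≤ (c : EReal)} := by
  have hK : ∀ d : ℝ, IsCompact
      (g '' {γ : ProbabilityMeasure Y | relEnt (γ : Measure Y) γ₀ ≤ (d : EReal)}) := by
    intro d
    refine (isCompact_sublevel γ₀ d).image_of_continuousOn fun γ hγ => ?_
    have hlt : ∀ γ' : ProbabilityMeasure Y, relEnt (γ' : Measure Y) γ₀ ≤ (d : EReal) →
        relEnt (γ' : Measure Y) γ₀ < ⊤ := fun γ' h => h.trans_lt (EReal.coe_lt_top d)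
    exact (hg γ (hlt γ hγ)).2.mono fun γ' hγ' => (hg γ' (hlt γ' hγ')).1
  have heq : {η | contractedRate γ₀ D g η ≤ (c : EReal)} = ⋂ d : Set.Ioi c,
      g '' {γ : ProbabilityMeasure Y | relEnt (γ : Measure Y) γ₀ ≤ ((d : ℝ) : EReal)} := by
    ext η
    simp only [Set.mem_ofPred_eq, Set.mem_iInter, Set.mem_image, Subtype.forall, Set.mem_Ioi]
    constructor
    · intro h d hd
      have hlt : contractedRate γ₀ D g η < (d : EReal) := h.trans_lt (EReal.coe_lt_coe_iff.2 hd)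
      obtain ⟨⟨γ, hγD, hγ⟩, hlt⟩ := iInf_lt_iff.1 hlt
      exact ⟨γ, hlt.le, hγ⟩
    · intro h
      refine EReal.le_of_forall_lt_iff_le.1 fun d hd => ?_
      obtain ⟨γ, hγ, rfl⟩ := h d (EReal.coe_lt_coe_iff.1 hd)
      exact (contractedRate_le (hg γ (hγ.trans_lt (EReal.coe_lt_top d))).1).trans hγ
  rw [heq]
  exact (hK (c + 1)).of_isClosed_subset (isClosed_iInter fun d => (hK d).isClosed)
    (Set.iInter_subset_of_subset ⟨c + 1, by simp⟩ subset_rfl)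

lemma lowerSemicontinuous_contractedRate {γ₀ : ProbabilityMeasure Y}
    {D : Set (ProbabilityMeasure Y)} {g : ProbabilityMeasure Y → ProbabilityMeasure X}
    (hg : ∀ γ : ProbabilityMeasure Y, relEnt (γ : Measure Y) (γ₀ : Measure Y) < ⊤ →
      γ ∈ D ∧ ContinuousWithinAt g D γ) :
    LowerSemicontinuous (contractedRate γ₀ D g) := by
  intro η a ha
  obtain ⟨c, hac, hc⟩ := EReal.lt_iff_exists_real_btwn.1 ha
  have ho := (isCompact_contractedRate hg c).isClosed.isOpen_compl
  filter_upwards [ho.mem_nhds (show η ∈ _ from not_le.2 hc)] with η' hη'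
  exact hac.trans (not_le.1 hη')

end contraction

end SanovLDP

/-- Large deviation principle for noise-based weakly interacting systems (Theorem 3.1):
under (A1)–(A3), the empirical measures `μ^N` of the system `X_i^N = ψ(μ^N, Y_i^N)` driven by
i.i.d. noise `Y_i^N ∼ γ₀` satisfy the LDP on `P(X)` with good rate function
`I(η) = inf { R(γ ‖ γ₀) : γ ∈ D, μ*(γ) = η }`. -/
theorem stmt9 {X Y : Type*}
    [MeasurableSpace X] [TopologicalSpace X] [PolishSpace X] [BorelSpace X]
    [MeasurableSpace Y] [TopologicalSpace Y] [PolishSpace Y] [BorelSpace Y]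
    [MeasurableSpace (ProbabilityMeasure X)] [BorelSpace (ProbabilityMeasure X)]
    [MeasurableSpace (ProbabilityMeasure Y)] [BorelSpace (ProbabilityMeasure Y)]
    (γ₀ : ProbabilityMeasure Y)
    (ψ : ProbabilityMeasure X → Y → X) (hψ : Measurable (Function.uncurry ψ))
    (D : Set (ProbabilityMeasure Y)) (hD : MeasurableSet D)
    (μstar : ProbabilityMeasure Y → ProbabilityMeasure X)
    -- (A1): unique fixed point of `μ = γ ∘ ψ(μ,·)⁻¹` for `γ ∈ D`, with `μ*` measurable on `D`
    (hA1 : ∀ γ ∈ D,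
      Measure.map (ψ (μstar γ)) (γ : Measure Y) = (μstar γ : Measure X) ∧
      ∀ μ : ProbabilityMeasure X,
        Measure.map (ψ μ) (γ : Measure Y) = (μ : Measure X) → μ = μstar γ)
    (hA1meas : Measurable fun γ : D => μstar (γ : ProbabilityMeasure Y))
    -- (A2): products of `γ₀` give full measure to tuples whose empirical measure lies in `D`
    (hA2 : ∀ N : ℕ,
      Measure.pi (fun _ : Fin (N + 1) => (γ₀ : Measure Y))
        {y : Fin (N + 1) → Y | empir y ∈ D} = 1)
    -- (A3): finite relative entropy w.r.t. `γ₀` implies membership in `D` and continuity of `μ*|D`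
    (hA3 : ∀ γ : ProbabilityMeasure Y, relEnt (γ : Measure Y) (γ₀ : Measure Y) < ⊤ →
      γ ∈ D ∧ ContinuousWithinAt μstar D γ)
    -- the `N`-particle systems
    {Ω : ℕ → Type*} [∀ N, MeasurableSpace (Ω N)]
    (P : ∀ N, Measure (Ω N)) (hP : ∀ N, IsProbabilityMeasure (P N))
    (Ys : ∀ N : ℕ, Fin (N + 1) → Ω N → Y)
    (hYmeas : ∀ N i, Measurable (Ys N i))
    (hiid : ∀ N : ℕ, Measure.map (fun ω => fun i => Ys N i ω) (P N) =
      Measure.pi (fun _ : Fin (N + 1) => (γ₀ : Measure Y)))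
    (Xs : ∀ N : ℕ, Fin (N + 1) → Ω N → X)
    (hrep : ∀ N : ℕ, ∀ᵐ ω ∂(P N), ∀ i : Fin (N + 1),
      Xs N i ω = ψ (empir fun j => Xs N j ω) (Ys N i ω)) :
    -- conclusion: LDP with good rate function `I`
    (LowerSemicontinuous fun η : ProbabilityMeasure X =>
      ⨅ γ : {γ : ProbabilityMeasure Y // γ ∈ D ∧ μstar γ = η},
        relEnt (γ.1 : Measure Y) (γ₀ : Measure Y)) ∧
    (∀ c : ℝ, IsCompact {η : ProbabilityMeasure X |
      (⨅ γ : {γ : ProbabilityMeasure Y // γ ∈ D ∧ μstar γ = η},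
        relEnt (γ.1 : Measure Y) (γ₀ : Measure Y)) ≤ (c : EReal)}) ∧
    ∀ B : Set (ProbabilityMeasure X), MeasurableSet B →
      (-(⨅ η ∈ interior B,
          ⨅ γ : {γ : ProbabilityMeasure Y // γ ∈ D ∧ μstar γ = η},
            relEnt (γ.1 : Measure Y) (γ₀ : Measure Y)) ≤
        Filter.liminf (fun N : ℕ =>
          (((N : ℝ) + 1)⁻¹ : ℝ) *
            ENNReal.log ((P N) {ω | empir (fun i => Xs N i ω) ∈ B})) Filter.atTop) ∧
      (Filter.limsup (fun N : ℕ =>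
          (((N : ℝ) + 1)⁻¹ : ℝ) *
            ENNReal.log ((P N) {ω | empir (fun i => Xs N i ω) ∈ B})) Filter.atTop ≤
        -(⨅ η ∈ closure B,
          ⨅ γ : {γ : ProbabilityMeasure Y // γ ∈ D ∧ μstar γ = η},
            relEnt (γ.1 : Measure Y) (γ₀ : Measure Y))) := by
  -- Events about the noise empirical measure have the probabilities given by Sanov's theorem.
  have hlaw : ∀ N (S : Set (ProbabilityMeasure Y)), MeasurableSet S →
      P N {ω | empir (fun i => Ys N i ω) ∈ S} =
        SanovLDP.iidLaw (γ₀ : Measure Y) N {y | empir y ∈ S} := fun N S hS => by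
    have hm : Measurable (fun ω => fun i => Ys N i ω) := measurable_pi_lambda _ (hYmeas N)
    have hSm : MeasurableSet {y : Fin (N + 1) → Y | empir y ∈ S} :=
      (SanovLDP.continuous_empir N).measurable hS
    rw [SanovLDP.iidLaw, ← hiid N, Measure.map_apply hm hSm]
    rfl
  have hae := fun N => SanovLDP.ae_empir_eq hψ hD (fun γ hγ => (hA1 γ hγ).2) (hA2 N) (hYmeas N)
    (hiid N) (hrep N)
  refine ⟨SanovLDP.lowerSemicontinuous_contractedRate hA3,
    SanovLDP.isCompact_contractedRate hA3, fun B _ => ⟨?_, ?_⟩⟩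
  · refine SanovLDP.contraction_lower hA3 isOpen_interior fun U hU hUD N => ?_
    rw [← hlaw N U hU.measurableSet]
    refine measure_mono_ae ?_
    filter_upwards [hae N] with ω hω hωU
    change empir (fun i => Xs N i ω) ∈ B
    rw [hω.2]
    exact interior_subset (hUD ⟨hωU, hω.1⟩)
  · refine SanovLDP.contraction_upper hA3 isClosed_closure fun N => ?_
    rw [← hlaw N _ isClosed_closure.measurableSet]
    refine measure_mono_ae ?_
    filter_upwards [hae N] with ω hω hωB
    refine subset_closure ⟨hω.1, subset_closure ?_⟩
    rw [← hω.2]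
    exact hωB
end
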